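/- If M is a squarefree positive integer, then there exist positive integers A and B with B < A such that b_4(An+B) ≡ 0 (mod M) for all nonnegative integers n. -/

import Mathlib

/-- `bReg k n` is the number of `k`-regular partitions of `n`,
i.e. partitions of `n` in which no part is divisible by `k`. -/
noncomputable def bReg (k n : ℕ) : ℕ :=
  (Finset.univ.filter fun p : n.Partition => ∀ i ∈ p.parts, ¬ k ∣ i).card

open PowerSeries Finset

namespace B4

/-! ### Finite forms of the identities of Gauss -/
section Fin
variable {R : Type*} [CommRing R] (x : R)

/-- product of `(1 - x^(k+1))` over `s ≤ k < n` -/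
def dd (n s : ℕ) : R := ∏ k ∈ Ico s n, (1 - x ^ (k + 1))

lemma dd_self (n : ℕ) : dd x n n = 1 := by simp [dd]

lemma dd_succ (n s : ℕ) (h : s ≤ n) : dd x (n + 1) s = dd x n s * (1 - x ^ (n + 1)) := by
  simp [dd, Finset.prod_Ico_succ_top h]

lemma dd_left (n s : ℕ) (h : s < n) : dd x n s = (1 - x ^ (s + 1)) * dd x n (s + 1) := by
  simp [dd, Finset.prod_eq_prod_Ico_succ_bot h]

/-- signed product of `(1 + x^k)` -/
def aa (s : ℕ) : R := (-1) ^ s * ∏ k ∈ range s, (1 + x ^ k)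

lemma aa_succ (s : ℕ) : aa x (s + 1) = - aa x s * (1 + x ^ s) := by
  simp [aa, Finset.prod_range_succ, pow_succ]; ring

lemma phi_tel (n m : ℕ) (h : m ≤ n) :
    ∑ s ∈ range m, aa x s * dd x n s * x ^ (s * (n + 1)) *
      ((1 - x ^ (n + 1)) * x ^ s - (1 + x ^ (n + 1))) =
    (1 - x ^ m) * dd x n m * aa x m * x ^ (m * (n + 1)) := by
  induction m with
  | zero => simp
  | succ m ih =>
    rw [sum_range_succ, ih (by omega), aa_succ, dd_left x n m (by omega)]
    ring

/-- coefficients of `φ(-q)` -/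
def ap (k : ℕ) : ℤ := if k = 0 then 1 else 2 * (-1) ^ k

lemma phi_fin (n : ℕ) : (∏ k ∈ range n, (1 + x ^ (k + 1))) *
      ∑ k ∈ range (n + 1), (ap k : R) * x ^ (k ^ 2) =
    ∑ s ∈ range (n + 1), aa x s * dd x n s * x ^ (s * (n + 1)) := by
  induction n with
  | zero => simp [ap, aa, dd]
  | succ n ih =>
    have h1 := phi_tel x n n le_rfl
    rw [sum_range_succ _ (n + 1), mul_add, prod_range_succ]
    have h2 : ∑ s ∈ range (n + 1 + 1), aa x s * dd x (n + 1) s * x ^ (s * (n + 1 + 1)) =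
       ∑ s ∈ range (n + 1), aa x s * dd x n s * x ^ (s * (n + 1)) * ((1 - x ^ (n + 1)) * x ^ s)
        + aa x (n + 1) * x ^ ((n + 1) * (n + 2)) := by
      rw [sum_range_succ, dd_self]
      congr 1
      · apply sum_congr rfl
        intro s hs
        rw [dd_succ x n s (by simp at hs; omega)]
        ring
      · ring
    have h3 : ∑ s ∈ range (n + 1), aa x s * dd x n s * x ^ (s * (n + 1)) * ((1 - x ^ (n + 1)) * x ^ s)
        = (1 + x ^ (n + 1)) * ∑ s ∈ range (n + 1), aa x s * dd x n s * x ^ (s * (n + 1))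
          + aa x (n + 1) * x ^ ((n + 1) * (n + 1)) := by
      have : ∑ s ∈ range (n + 1), aa x s * dd x n s * x ^ (s * (n + 1)) * ((1 - x ^ (n + 1)) * x ^ s)
        - (1 + x ^ (n + 1)) * ∑ s ∈ range (n + 1), aa x s * dd x n s * x ^ (s * (n + 1)) =
        ∑ s ∈ range (n + 1), aa x s * dd x n s * x ^ (s * (n + 1)) *
      ((1 - x ^ (n + 1)) * x ^ s - (1 + x ^ (n + 1))) := by
        rw [mul_sum, ← sum_sub_distrib]
        apply sum_congr rfl
        intros; ring
      rw [sum_range_succ (fun s => aa x s * dd x n s * x ^ (s * (n + 1)) *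
        ((1 - x ^ (n + 1)) * x ^ s - (1 + x ^ (n + 1)))), h1, dd_self] at this
      rw [aa_succ]
      linear_combination this
    rw [h2, h3, ← ih]
    have h4 : aa x (n + 1) * (1 + x ^ (n + 1)) =
        (∏ k ∈ range (n + 1), (1 + x ^ (k + 1))) * (ap (n + 1) : R) := by
      simp only [aa, ap]
      rw [Finset.prod_range_succ', prod_range_succ]
      push_cast
      simp
      ring
    rw [prod_range_succ] at h4
    linear_combination x ^ ((n + 1) ^ 2) * (-h4)

lemma phi_fin' (n : ℕ) : ∃ r : R, (∏ k ∈ range n, (1 + x ^ (k + 1))) *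
      ∑ k ∈ range (n + 1), (ap k : R) * x ^ (k ^ 2) =
     (∏ k ∈ range n, (1 - x ^ (k + 1))) + x ^ (n + 1) * r := by
  rw [phi_fin, Finset.sum_range_succ']
  refine ⟨∑ k ∈ range n, aa x (k + 1) * dd x n (k + 1) * x ^ (k * (n + 1)), ?_⟩
  rw [mul_sum, add_comm]
  congr 1
  · simp [aa, dd]
  · apply sum_congr rfl; intros; ring

/-- product of `(1 - x^(2 * k + 1))` -/
def oo (s : ℕ) : R := ∏ k ∈ range s, (1 - x ^ (2 * k + 1))
lemma oo_succ (s : ℕ) : oo x (s + 1) = oo x s * (1 - x ^ (2 * s + 1)) := by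
  simp [oo, Finset.prod_range_succ]

lemma psi_tel (n m : ℕ) (h : m ≤ n) :
    ∑ s ∈ range m, dd (x ^ 2) n s * oo x s * x ^ (s * (2 * n + 1)) *
      ((1 - x ^ (2 * n + 2)) * x ^ (2 * s) - (1 - x ^ (2 * n + 1))) =
    (1 - x ^ (2 * m)) * dd (x ^ 2) n m * oo x m * x ^ (m * (2 * n + 1)) := by
  induction m with
  | zero => simp
  | succ m ih =>
    rw [sum_range_succ, ih (by omega), oo_succ, dd_left _ n m (by omega)]
    ring

lemma psi_fin (n : ℕ) : oo x n * ∑ k ∈ range (2 * n), x ^ (k * (k + 1) / 2) =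
    ∑ s ∈ range n, dd (x ^ 2) n s * oo x s * x ^ (s * (2 * n + 1)) := by
  induction n with
  | zero => simp
  | succ n ih =>
    have h1 := psi_tel x n n le_rfl
    have e1 : 2 * n * (2 * n + 1) / 2 = n * (2 * n + 1) := by
      rw [mul_assoc]; exact Nat.mul_div_cancel_left _ (by norm_num)
    have e2 : (2 * n + 1) * (2 * n + 1 + 1) / 2 = (n + 1) * (2 * n + 1) := by
      rw [show (2 * n + 1) * (2 * n + 1 + 1) = 2 * ((n + 1) * (2 * n + 1)) by ring]
      exact Nat.mul_div_cancel_left _ (by norm_num)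
    rw [show 2 * (n + 1) = 2 * n + 1 + 1 by ring, sum_range_succ _ (2 * n + 1),
      sum_range_succ _ (2 * n), e1, e2, oo_succ]
    have h2 : ∑ s ∈ range (n + 1), dd (x ^ 2) (n + 1) s * oo x s * x ^ (s * (2 * n + 1 + 1 + 1)) =
       ∑ s ∈ range n, dd (x ^ 2) n s * oo x s * x ^ (s * (2 * n + 1)) *
          ((1 - x ^ (2 * n + 2)) * x ^ (2 * s))
        + (1 - x ^ (2 * n + 2)) * oo x n * x ^ (n * (2 * n + 3)) := by
      rw [sum_range_succ, dd_succ _ _ _ le_rfl, dd_self]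
      congr 1
      · apply sum_congr rfl
        intro s hs
        rw [dd_succ _ n s (by simp at hs; omega)]
        ring
      · ring
    have h3 : ∑ s ∈ range n, dd (x ^ 2) n s * oo x s * x ^ (s * (2 * n + 1)) *
          ((1 - x ^ (2 * n + 2)) * x ^ (2 * s))
        = (1 - x ^ (2 * n + 1)) * ∑ s ∈ range n, dd (x ^ 2) n s * oo x s * x ^ (s * (2 * n + 1))
          + (1 - x ^ (2 * n)) * oo x n * x ^ (n * (2 * n + 1)) := by
      have : ∑ s ∈ range n, dd (x ^ 2) n s * oo x s * x ^ (s * (2 * n + 1)) *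
          ((1 - x ^ (2 * n + 2)) * x ^ (2 * s))
        - (1 - x ^ (2 * n + 1)) * ∑ s ∈ range n, dd (x ^ 2) n s * oo x s * x ^ (s * (2 * n + 1)) =
        ∑ s ∈ range n, dd (x ^ 2) n s * oo x s * x ^ (s * (2 * n + 1)) *
      ((1 - x ^ (2 * n + 2)) * x ^ (2 * s) - (1 - x ^ (2 * n + 1))) := by
        rw [mul_sum, ← sum_sub_distrib]
        apply sum_congr rfl
        intros; ring
      rw [h1, dd_self] at this
      linear_combination this
    rw [h2, h3, ← ih]
    ring

lemma psi_fin' (n : ℕ) (hn : 1 ≤ n) : ∃ r : R, (∏ k ∈ range n, (1 - x ^ (2 * k + 1))) *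
      ∑ k ∈ range (2 * n), x ^ (k * (k + 1) / 2) =
     (∏ k ∈ range n, (1 - x ^ (2 * k + 2))) + x ^ (n + 1) * r := by
  have := psi_fin x n
  unfold oo at this
  rw [this]
  obtain ⟨m, rfl⟩ : ∃ m, n = m + 1 := ⟨n - 1, by omega⟩
  rw [Finset.sum_range_succ']
  refine ⟨∑ k ∈ range m, dd (x ^ 2) (m + 1) (k + 1) * oo x (k + 1) *
    x ^ (k * (2 * (m + 1) + 1) + m + 1), ?_⟩
  rw [mul_sum, add_comm]
  congr 1
  · simp [dd, ← pow_mul, mul_add]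
  · apply sum_congr rfl; intros; unfold oo; ring

end Fin
end B4

open PowerSeries Finset
namespace B4

/-! ### Sparse series -/
/-- the series `∑ a k X^(e k)` -/
noncomputable def th (a : ℕ → ℤ) (e : ℕ → ℕ) : ℤ⟦X⟧ :=
  PowerSeries.mk fun n => ∑ k ∈ range (n + 1), if e k = n then a k else 0

lemma th_coeff {a : ℕ → ℤ} {e : ℕ → ℕ} (he : StrictMono e) (k : ℕ) :
    coeff (e k) (th a e) = a k := by
  rw [th, coeff_mk, Finset.sum_eq_single k]
  · simp
  · intro b _ hb
    rw [if_neg]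
    intro h
    exact hb (he.injective h)
  · intro h
    exfalso
    apply h
    have := he.id_le k
    simp at *
    omega

lemma th_coeff_zero {a : ℕ → ℤ} {e : ℕ → ℕ} (n : ℕ) (h : ∀ k, e k ≠ n) :
    coeff n (th a e) = 0 := by
  rw [th, coeff_mk]
  apply Finset.sum_eq_zero
  intro k _
  rw [if_neg (h k)]

lemma th_expand {a : ℕ → ℤ} {e : ℕ → ℕ} (he : StrictMono e) (p : ℕ) (hp : p ≠ 0) :
    expand p hp (th a e) = th a (fun k => p * e k) := by
  have he' : StrictMono (fun k => p * e k) := fun a b h =>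
    Nat.mul_lt_mul_of_pos_left (he h) (Nat.pos_of_ne_zero hp)
  ext n
  by_cases h : ∃ k, p * e k = n
  · obtain ⟨k, rfl⟩ := h
    rw [th_coeff (e := fun k => p * e k) he' k, coeff_expand_mul, th_coeff he]
  · push Not at h
    rw [th_coeff_zero (e := fun k => p * e k) n h, coeff_expand]
    split_ifs with hd
    · obtain ⟨m, rfl⟩ := hd
      rw [Nat.mul_div_cancel_left _ (Nat.pos_of_ne_zero hp)]
      apply th_coeff_zero
      intro k hk
      exact h k (by rw [hk])
    · rfl

open scoped PowerSeries.WithPiTopology Topology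
open Filter

lemma th_tendsto {a : ℕ → ℤ} {e : ℕ → ℕ} (he : StrictMono e) :
    Tendsto (fun n => ∑ k ∈ range n, (a k : ℤ⟦X⟧) * X ^ (e k)) atTop (𝓝 (th a e)) := by
  rw [PowerSeries.WithPiTopology.tendsto_iff_coeff_tendsto]
  intro d
  apply tendsto_const_nhds.congr'
  filter_upwards [eventually_gt_atTop d] with n hn
  rw [th, coeff_mk, map_sum]
  have h1 : ∀ k, coeff d ((a k : ℤ⟦X⟧) * X ^ (e k)) = if e k = d then a k else 0 := by
    intro k
    rw [show (a k : ℤ⟦X⟧) = C (a k) by simp, coeff_C_mul, coeff_X_pow]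
    by_cases h : e k = d
    · simp [h]
    · simp [h, Ne.symm h]
  simp_rw [h1]
  apply Finset.sum_subset
  · intro x; simp; omega
  · intro k _ hk
    rw [if_neg]
    intro h
    have := he.id_le k
    simp at *
    omega

lemma mult_of_dvd (u : ℕ → ℤ⟦X⟧) (h : ∀ i, X ^ (i + 1) ∣ u i) : Multipliable (fun i => 1 + u i) := by
  apply PowerSeries.WithPiTopology.multipliable_one_add_of_tendsto_order_atTop_nhds_top
  refine ENat.tendsto_nhds_top_iff_natCast_lt.mpr (fun n ↦ Filter.eventually_atTop.mpr ⟨n, ?_⟩)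
  intro m hm
  have := (PowerSeries.X_pow_dvd_iff.1 (h m))
  refine lt_of_lt_of_le ?_ (PowerSeries.le_order _ (m + 1 : ℕ) ?_)
  · exact_mod_cast Nat.lt_add_one_iff.mpr hm
  · intro i hi
    exact this i (by exact_mod_cast hi)

lemma tprod_tendsto (u : ℕ → ℤ⟦X⟧) (h : ∀ i, X ^ (i + 1) ∣ u i) :
    Tendsto (fun n => ∏ i ∈ range n, (1 + u i)) atTop (𝓝 (∏' i, (1 + u i))) :=
  (mult_of_dvd u h).hasProd.tendsto_prod_nat

lemma tprod_ne (u : ℕ → ℤ⟦X⟧) (h : ∀ i, X ^ (i + 1) ∣ u i) : (∏' i, (1 + u i)) ≠ 0 := by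
  intro h0
  have h1 := ((PowerSeries.WithPiTopology.continuous_constantCoeff ℤ).tendsto _).comp
    (tprod_tendsto u h)
  rw [h0] at h1
  have h2 : ((constantCoeff (R := ℤ)) ∘ fun n => ∏ i ∈ range n, (1 + u i)) = fun _ => 1 := by
    funext n
    simp only [Function.comp, map_prod]
    apply Finset.prod_eq_one
    intro i _
    have : constantCoeff (u i) = 0 := by
      have := PowerSeries.X_pow_dvd_iff.1 (h i) 0 (by omega)
      simpa using this
    simp [this]
  rw [h2] at h1
  have := tendsto_nhds_unique h1 tendsto_const_nhds
  simp at this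

/-- infinite products -/
noncomputable def pm (x : ℤ⟦X⟧) : ℤ⟦X⟧ := ∏' i : ℕ, (1 + x ^ (i + 1))
/-- infinite products -/
noncomputable def pf (x : ℤ⟦X⟧) : ℤ⟦X⟧ := ∏' i : ℕ, (1 + -x ^ (i + 1))
/-- infinite products -/
noncomputable def po (x : ℤ⟦X⟧) : ℤ⟦X⟧ := ∏' i : ℕ, (1 + -x ^ (2 * i + 1))

section
variable {x : ℤ⟦X⟧}
lemma dv (hx : X ∣ x) {i j : ℕ} (h : i ≤ j) : X ^ i ∣ x ^ j := (pow_dvd_pow _ h).trans (pow_dvd_pow_of_dvd hx j)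
lemma tm (hx : X ∣ x) : Tendsto (fun n => ∏ i ∈ range n, (1 + x ^ (i + 1))) atTop (𝓝 (pm x)) :=
  tprod_tendsto _ fun _ => dv hx le_rfl
lemma tf (hx : X ∣ x) : Tendsto (fun n => ∏ i ∈ range n, (1 - x ^ (i + 1))) atTop (𝓝 (pf x)) := by
  simp_rw [sub_eq_add_neg]
  exact tprod_tendsto _ fun _ => (dvd_neg.2 (dv hx le_rfl))
lemma tendo (hx : X ∣ x) : Tendsto (fun n => ∏ i ∈ range n, (1 - x ^ (2 * i + 1))) atTop (𝓝 (po x)) := by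
  simp_rw [sub_eq_add_neg]
  exact tprod_tendsto _ fun _ => (dvd_neg.2 (dv hx (by omega)))
lemma pm_ne (hx : X ∣ x) : pm x ≠ 0 := tprod_ne _ fun _ => dv hx le_rfl
lemma pf_ne (hx : X ∣ x) : pf x ≠ 0 := tprod_ne _ fun _ => (dvd_neg.2 (dv hx le_rfl))
lemma po_ne (hx : X ∣ x) : po x ≠ 0 := tprod_ne _ fun _ => (dvd_neg.2 (dv hx (by omega)))

lemma hx2 (hx : X ∣ x) : X ∣ x ^ 2 := dvd_pow hx (by norm_num)
lemma hxn (hx : X ∣ x) : X ∣ - x := (dvd_neg.2 hx)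

lemma pf_pm (hx : X ∣ x) : pf x * pm x = pf (x ^ 2) := by
  refine tendsto_nhds_unique ((tf hx).mul (tm hx)) ((tf (hx2 hx)).congr fun n => ?_)
  rw [← prod_mul_distrib]
  apply prod_congr rfl; intros; ring

lemma two_tendsto : Tendsto (fun n : ℕ => 2 * n) atTop atTop :=
  tendsto_id.const_mul_atTop' (by norm_num)

lemma prod_two {R : Type*} [CommRing R] (u : ℕ → R) (n : ℕ) : ∏ i ∈ range (2 * n), u i =
    (∏ i ∈ range n, u (2 * i)) * ∏ i ∈ range n, u (2 * i + 1) := by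
  induction n with
  | zero => simp
  | succ n ih => rw [show 2 * (n + 1) = 2 * n + 1 + 1 by ring]; simp only [prod_range_succ, ih]; ring

lemma po_pf (hx : X ∣ x) : po x * pf (x ^ 2) = pf x := by
  refine tendsto_nhds_unique ((tendo hx).mul (tf (hx2 hx)))
    (((tf hx).comp two_tendsto).congr fun n => ?_)
  simp only [Function.comp]
  rw [prod_two]
  congr 1
  apply prod_congr rfl; intros; ring

lemma po_pm (hx : X ∣ x) : po (-x) * pm (x ^ 2) = pm x := by
  refine tendsto_nhds_unique ((tendo (hxn hx)).mul (tm (hx2 hx)))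
    (((tm hx).comp two_tendsto).congr fun n => ?_)
  simp only [Function.comp]
  rw [prod_two]
  congr 1
  · apply prod_congr rfl; intros; simp [pow_succ, pow_mul]
  · apply prod_congr rfl; intros; ring

lemma po_po (hx : X ∣ x) : po x * po (-x) = po (x ^ 2) := by
  refine tendsto_nhds_unique ((tendo hx).mul (tendo (hxn hx))) ((tendo (hx2 hx)).congr fun n => ?_)
  rw [← prod_mul_distrib]
  apply prod_congr rfl; intros
  simp [pow_succ, pow_mul]; ring

lemma err_tendsto (hx : X ∣ x) (r : ℕ → ℤ⟦X⟧) : Tendsto (fun n => x ^ (n + 1) * r n) atTop (𝓝 0) := by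
  rw [PowerSeries.WithPiTopology.tendsto_iff_coeff_tendsto]
  intro d
  apply tendsto_const_nhds.congr'
  filter_upwards [eventually_gt_atTop d] with n hn
  have : X ^ (n + 1) ∣ x ^ (n + 1) * r n := (dv hx le_rfl).mul_right _
  rw [PowerSeries.X_pow_dvd_iff.1 this d (by omega)]
  simp

/-- Gauss -/
lemma gauss_phi (hx : X ∣ x) {p : ℤ⟦X⟧}
    (hp : Tendsto (fun n => ∑ k ∈ range n, (ap k : ℤ⟦X⟧) * x ^ (k ^ 2)) atTop (𝓝 p)) :
    pm x * p = pf x := by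
  choose r hr using phi_fin' x
  have h1 := (tm hx).mul (hp.comp (tendsto_add_atTop_nat 1))
  have h2 := (tf hx).add (err_tendsto hx r)
  rw [add_zero] at h2
  refine tendsto_nhds_unique h1 (h2.congr fun n => ?_)
  rw [← hr]; rfl

/-- Gauss -/
lemma gauss_psi (hx : X ∣ x) {p : ℤ⟦X⟧}
    (hp : Tendsto (fun n => ∑ k ∈ range n, x ^ (k * (k + 1) / 2)) atTop (𝓝 p)) :
    po x * p = pf (x ^ 2) := by
  have : ∀ n, ∃ r : ℤ⟦X⟧, 1 ≤ n → (∏ k ∈ range n, (1 - x ^ (2 * k + 1))) *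
      ∑ k ∈ range (2 * n), x ^ (k * (k + 1) / 2) =
     (∏ k ∈ range n, (1 - x ^ (2 * k + 2))) + x ^ (n + 1) * r := by
    intro n
    by_cases hn : 1 ≤ n
    · obtain ⟨r, hr⟩ := psi_fin' x n hn
      exact ⟨r, fun _ => hr⟩
    · exact ⟨0, fun h => absurd h hn⟩
  choose r hr using this
  have h1 := (tendo hx).mul (hp.comp two_tendsto)
  have h2 := (tf (hx2 hx)).add (err_tendsto hx r)
  rw [add_zero] at h2
  refine tendsto_nhds_unique h1 (h2.congr' ?_)
  filter_upwards [eventually_ge_atTop 1] with n hn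
  simp only [Function.comp]
  rw [hr n hn]
  congr 1
  apply prod_congr rfl
  intros; ring

lemma phi_phi (hx : X ∣ x) {p s p' : ℤ⟦X⟧} (hp : pm x * p = pf x) (hs : pm (-x) * s = pf (-x))
    (hp' : pm (x ^ 2) * p' = pf (x ^ 2)) : p * s = p' ^ 2 := by
  have a1 := po_pm hx
  have a2 := po_pm (hxn hx)
  have a3 := po_pf hx
  have a4 := po_pf (hxn hx)
  simp only [neg_neg, neg_sq] at a2 a4
  rw [← a1, ← a3, ← hp'] at hp
  rw [← a2, ← a4, ← hp'] at hs
  have n1 := po_ne hx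
  have n2 := po_ne (hxn hx)
  have n3 := pm_ne (hx2 hx)
  apply mul_left_cancel₀ (mul_ne_zero (mul_ne_zero n1 n2) (pow_ne_zero 2 n3))
  linear_combination hp * s * po x * pm (x ^ 2) + hs * po x * pm (x ^ 2) * p'

lemma psi_psi (hx : X ∣ x) {a w z : ℤ⟦X⟧} (ha : po x * a = pf (x ^ 2)) (hw : pm (-x) * w = pf (-x))
    (hz : po (x ^ 2) * z = pf ((x ^ 2) ^ 2)) : a ^ 2 = w * z := by
  have a2 := po_pm (hxn hx)
  have a4 := po_pf (hxn hx)
  have a5 := pf_pm (hx2 hx)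
  have a6 := po_po hx
  simp only [neg_neg, neg_sq] at a2 a4
  rw [← a2, ← a4, ← ha] at hw
  rw [← a5, ← a6, ← ha] at hz
  have n1 := po_ne hx
  have n2 := po_ne (hxn hx)
  have n3 := pm_ne (hx2 hx)
  apply mul_left_cancel₀ (mul_ne_zero (mul_ne_zero (pow_ne_zero 2 n1) n2) n3)
  linear_combination - hz * po x * po (-x) * a  - hw * po x * po (-x) * z

lemma gf_rel (hx : X ∣ x) {G p a : ℤ⟦X⟧} (hG : G = pm x * pm (x ^ 2)) (hp : pm x * p = pf x)
    (ha : po (-x) * a = pf (x ^ 2)) : G * p = a := by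
  have a1 := po_pm hx
  have a2 := pf_pm hx
  have n2 := po_ne (hxn hx)
  apply mul_left_cancel₀ n2
  rw [ha, ← a2, hG]
  linear_combination p * pm x * a1 + hp * pm x

end

lemma gf_prod : (PowerSeries.mk fun n => ((Nat.Partition.countRestricted n 4).card : ℤ)) =
    pm X * pm (X ^ 2) := by
  have h := (Nat.Partition.hasProd_powerSeriesMk_card_countRestricted ℤ (m := 4)
    (by norm_num)).tendsto_prod_nat
  refine tendsto_nhds_unique h
   (((tm (x := X) dvd_rfl).mul (tm (x := X ^ 2) (dvd_pow_self _ (by norm_num)))).congr fun n => ?_)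
  rw [← prod_mul_distrib]
  apply prod_congr rfl
  intro i _
  simp [sum_range_succ]
  ring
end B4

open PowerSeries Finset
namespace B4

/-- substitution `X ↦ X^k` -/
noncomputable abbrev ex {R : Type*} [CommRing R] (k : ℕ) [NeZero k] : R⟦X⟧ →ₐ[R] R⟦X⟧ :=
  expand k (NeZero.ne k)

/-- coefficients of `φ(q)` -/
def as (k : ℕ) : ℤ := if k = 0 then 1 else 2
/-- coefficients of `ψ(-q)` -/
def ar (k : ℕ) : ℤ := (-1) ^ (k * (k + 1) / 2)

/-- theta series -/
noncomputable def sP : ℤ⟦X⟧ := th ap fun k => 8 * k ^ 2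
/-- theta series -/
noncomputable def sS : ℤ⟦X⟧ := th as fun k => 8 * k ^ 2
/-- theta series -/
noncomputable def sQ : ℤ⟦X⟧ := th (fun _ => 1) fun k => 2 * (2 * k + 1) ^ 2
/-- theta series -/
noncomputable def sR : ℤ⟦X⟧ := th ar fun k => (2 * k + 1) ^ 2

lemma mono_sq : StrictMono fun k : ℕ => k ^ 2 := fun a b h => Nat.pow_lt_pow_left h (by norm_num)
lemma mono_odd : StrictMono fun k : ℕ => (2 * k + 1) ^ 2 :=
  fun a b h => Nat.pow_lt_pow_left (by omega) (by norm_num)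
lemma mono_mul {e : ℕ → ℕ} (he : StrictMono e) (c : ℕ) (hc : 0 < c) :
    StrictMono fun k => c * e k := fun _ _ h => Nat.mul_lt_mul_of_pos_left (he h) hc
lemma mono_tri : StrictMono fun k : ℕ => k * (k + 1) / 2 := by
  apply strictMono_nat_of_lt_succ
  intro k
  have : (k + 1) * (k + 1 + 1) = k * (k + 1) + (k + 1) * 2 := by ring
  rw [this, Nat.add_mul_div_right _ _ (by norm_num)]
  omega

lemma tri_two (k : ℕ) : 2 * (k * (k + 1) / 2) = k * (k + 1) :=
  Nat.mul_div_cancel' (Nat.even_mul_succ_self k).two_dvd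

open scoped PowerSeries.WithPiTopology Topology
open Filter

lemma th_shift {a : ℕ → ℤ} {e : ℕ → ℕ} (he : StrictMono e) (c : ℕ) :
    X ^ c * th a e = th a (fun k => e k + c) := by
  have he' : StrictMono fun k => e k + c := fun _ _ h => Nat.add_lt_add_right (he h) c
  have h1 := (tendsto_const_nhds (x := (X ^ c : ℤ⟦X⟧))).mul (th_tendsto (a := a) he)
  refine tendsto_nhds_unique h1 ((th_tendsto (a := a) he').congr fun n => ?_)
  rw [mul_sum]
  apply sum_congr rfl
  intros; ring

lemma psi_shift (c d : ℕ) (hc : c = 8 * d) (hd : 0 < d) (a : ℕ → ℤ) :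
   th a (fun k => d * (2 * k + 1) ^ 2) = X ^ d * th a (fun k => c * (k * (k + 1) / 2)) := by
  rw [th_shift (mono_mul mono_tri _ (by omega))]
  congr 1
  funext k
  rw [hc]
  have := tri_two k
  zify at this ⊢
  linear_combination (-4 * d : ℤ) * this

lemma lim_P (c : ℕ) (hc : 0 < c) :
    pm (X ^ c) * th ap (fun k => c * k ^ 2) = pf (X ^ c) := by
  apply gauss_phi (dvd_pow_self _ hc.ne')
  refine (th_tendsto (mono_mul mono_sq c hc)).congr fun n => ?_
  apply sum_congr rfl
  intros; ring

lemma lim_S (c : ℕ) (hc : 0 < c) :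
    pm (- X ^ c) * th as (fun k => c * k ^ 2) = pf (- X ^ c) := by
  apply gauss_phi (hxn (dvd_pow_self _ hc.ne'))
  refine (th_tendsto (mono_mul mono_sq c hc)).congr fun n => ?_
  apply sum_congr rfl
  intro k _
  rw [neg_pow, ← pow_mul]
  by_cases hk : k = 0
  · simp [hk, as, ap]
  · simp only [as, ap, hk, if_false]
    push_cast
    rw [sq, pow_mul (-1 : ℤ⟦X⟧)]
    have : ((-1 : ℤ⟦X⟧) ^ k) * ((-1) ^ k) ^ k = 1 := by
      rw [← pow_succ', ← pow_mul]
      exact Even.neg_one_pow (Nat.even_mul_succ_self k)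
    linear_combination (-2 * X ^ (c * (k * k))) * this

lemma lim_Q (c : ℕ) (hc : 0 < c) :
    po (X ^ c) * th (fun _ => 1) (fun k => c * (k * (k + 1) / 2)) = pf ((X ^ c) ^ 2) := by
  apply gauss_psi (dvd_pow_self _ hc.ne')
  refine (th_tendsto (mono_mul mono_tri c hc)).congr fun n => ?_
  apply sum_congr rfl
  intros; simp [pow_mul]

lemma lim_R (c : ℕ) (hc : 0 < c) :
    po (- X ^ c) * th ar (fun k => c * (k * (k + 1) / 2)) = pf ((- X ^ c) ^ 2) := by
  apply gauss_psi (hxn (dvd_pow_self _ hc.ne'))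
  refine (th_tendsto (mono_mul mono_tri c hc)).congr fun n => ?_
  apply sum_congr rfl
  intro k _
  rw [neg_pow]
  simp [ar, pow_mul]

lemma PS : sP * sS = (ex 2 sP) ^ 2 := by
  rw [sP, sS, ex, th_expand (mono_mul mono_sq 8 (by norm_num))]
  refine phi_phi (x := X ^ 8) (dvd_pow_self _ (by norm_num)) (lim_P 8 (by norm_num))
    (lim_S 8 (by norm_num)) ?_
  have := lim_P 16 (by norm_num)
  rw [← pow_mul]
  simpa [← mul_assoc] using this

lemma QQ : sQ ^ 2 = ex 2 sQ * ex 2 sS := by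
  rw [sQ, sS, ex, th_expand (mono_mul mono_sq 8 (by norm_num)),
    th_expand (mono_mul mono_odd 2 (by norm_num))]
  simp only [← mul_assoc]
  norm_num only
  rw [psi_shift 16 2 rfl (by norm_num), psi_shift 32 4 rfl (by norm_num)]
  have h := psi_psi (x := X ^ 16) (dvd_pow_self _ (by norm_num)) (lim_Q 16 (by norm_num))
    (lim_S 16 (by norm_num)) (z := th (fun _ => 1) (fun k => 32 * (k * (k + 1) / 2))) (by
      have := lim_Q 32 (by norm_num)
      rw [← pow_mul]
      exact this)
  linear_combination X ^ 4 * h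

lemma RR : sR ^ 2 = sP * sQ := by
  rw [sP, sQ]
  have e1 : sR = th ar (fun k => 1 * (2 * k + 1) ^ 2) := by simp [sR]
  rw [e1]
  rw [psi_shift 16 2 rfl (by norm_num), psi_shift 8 1 rfl (by norm_num)]
  have h := psi_psi (x := -X ^ 8) (hxn (dvd_pow_self _ (by norm_num))) (lim_R 8 (by norm_num))
    (w := th ap (fun k => 8 * k ^ 2))
    (by rw [neg_neg]; exact lim_P 8 (by norm_num))
    (z := th (fun _ => 1) (fun k => 16 * (k * (k + 1) / 2))) (by
      have := lim_Q 16 (by norm_num)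
      rw [neg_sq, ← pow_mul]
      exact this)
  linear_combination X ^ 2 * h

/-- generating function of `b_4` -/
noncomputable def gB : ℤ⟦X⟧ := PowerSeries.mk fun n => (bReg 4 n : ℤ)

lemma gB_rel : gB * th ap (fun k => k ^ 2) = th ar (fun k => k * (k + 1) / 2) := by
  apply gf_rel (x := X) dvd_rfl
  · rw [← gf_prod, gB]
    congr 1
    funext n
    rw [← Nat.Partition.card_restricted_eq_card_countRestricted n (by norm_num)]
    simp [bReg, Nat.Partition.restricted]
  · simpa using lim_P 1 (by norm_num)
  · simpa using lim_R 1 (by norm_num)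

/-- The basic series `F = ∑ b_4(n) X^(8 * n + 1)` -/
noncomputable def sF : ℤ⟦X⟧ := X * ex 8 gB

lemma FP : sF * sP = sR := by
  have h := congrArg (ex 8) gB_rel
  rw [map_mul, ex, th_expand mono_sq, th_expand mono_tri] at h
  have e1 : sR = th ar (fun k => 1 * (2 * k + 1) ^ 2) := by simp [sR]
  rw [e1, psi_shift 8 1 rfl (by norm_num), sF, sP, ex, mul_assoc, h, pow_one]

lemma coeff_F (n : ℕ) : coeff (8 * n + 1) sF = bReg 4 n := by
  rw [sF, coeff_succ_X_mul, ex, coeff_expand_mul, gB, coeff_mk]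

lemma th_ext {a : ℕ → ℤ} {e : ℕ → ℕ} (he : StrictMono e) {f : ℤ⟦X⟧}
    (h1 : ∀ k, coeff (e k) f = a k) (h2 : ∀ n, (∀ k, e k ≠ n) → coeff n f = 0) : th a e = f := by
  ext n
  by_cases h : ∃ k, e k = n
  · obtain ⟨k, rfl⟩ := h
    rw [th_coeff he, h1]
  · push Not at h
    rw [th_coeff_zero n h, h2 n h]

lemma ex4S : ex 4 sS = th as fun k => 8 * (2 * k) ^ 2 := by
  rw [sS, ex, th_expand (mono_mul mono_sq 8 (by norm_num))]
  congr 1; funext k; ring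

lemma ex4Q : ex 4 sQ = th (fun _ => 1) fun k => 8 * (2 * k + 1) ^ 2 := by
  rw [sQ, ex, th_expand (mono_mul mono_odd 2 (by norm_num))]
  congr 1; funext k; ring

lemma mono_ev : StrictMono fun k : ℕ => 8 * (2 * k) ^ 2 :=
  mono_mul (fun a b h => Nat.pow_lt_pow_left (by omega) (by norm_num)) 8 (by norm_num)

lemma split_aux (a : ℕ → ℤ) (s : ℤ) (h0 : ∀ k, a (2 * k) = as k) (h1 : ∀ k, a (2 * k + 1) = s) :
    th a (fun k => 8 * k ^ 2) = ex 4 sS + C s * ex 4 sQ := by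
  rw [ex4S, ex4Q]
  have m2 : StrictMono fun k : ℕ => 8 * (2 * k + 1) ^ 2 := mono_mul mono_odd 8 (by norm_num)
  apply th_ext (mono_mul mono_sq 8 (by norm_num))
  · intro k
    rw [map_add, coeff_C_mul]
    obtain ⟨j, rfl | rfl⟩ := Nat.even_or_odd' k
    · rw [th_coeff (e := fun k : ℕ => 8 * (2 * k) ^ 2) mono_ev j, h0, th_coeff_zero]
      · simp
      · intro i hi
        have : 2 * i + 1 = 2 * j := Nat.pow_left_injective (n := 2) (by norm_num) (by simpa using hi)
        omega
    · rw [th_coeff (e := fun k : ℕ => 8 * (2 * k + 1) ^ 2) m2 j, h1, th_coeff_zero]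
      · simp
      · intro i hi
        have : 2 * i = 2 * j + 1 := Nat.pow_left_injective (n := 2) (by norm_num) (by simpa using hi)
        omega
  · intro n hn
    rw [map_add, coeff_C_mul, th_coeff_zero n (fun k => hn _), th_coeff_zero n (fun k => hn _)]
    simp

lemma S_split : sS = ex 4 sS + 2 * ex 4 sQ := by
  conv_lhs => rw [sS]
  rw [split_aux as 2]
  · simp
  · intro k; simp [as]
  · intro k; simp [as]

lemma P_split : sP = ex 4 sS - 2 * ex 4 sQ := by
  rw [sP, split_aux ap (-2)]
  · simp; ring
  · intro k; simp [as, ap]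
  · intro k; simp [ap, pow_succ]

end B4

open PowerSeries Finset
namespace B4

lemma ex_ex {R : Type*} [CommRing R] (a b c : ℕ) [NeZero a] [NeZero b] [NeZero c] (h : a * b = c)
    (f : R⟦X⟧) : ex a (ex b f) = ex c f := by
  subst h
  rw [ex, ex, ex, expand_mul]

lemma ex2_const {R : Type*} [CommRing R] (u v : R) (hu : v * u = 1) (f : R⟦X⟧)
    (h : ex 2 f = C u * f) (n : ℕ) (hn : 0 < n) : coeff n f = 0 := by
  induction n using Nat.strong_induction_on with
  | _ n ih =>
    have h1 := congrArg (coeff n) h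
    rw [coeff_C_mul] at h1
    have h2 : u * coeff n f = 0 := by
      rw [← h1]
      obtain ⟨m, rfl | rfl⟩ := Nat.even_or_odd' n
      · rw [ex, coeff_expand_mul, ih m (by omega) (by omega)]
      · rw [ex, coeff_expand_of_not_dvd]
        omega
    calc coeff n f = (v * u) * coeff n f := by rw [hu, one_mul]
      _ = 0 := by rw [mul_assoc, h2, mul_zero]

lemma X_dvd_ex {R : Type*} [CommRing R] (a : ℕ) [NeZero a] (f : R⟦X⟧) (n : ℕ) (h : X ^ n ∣ f) :
    X ^ (a * n) ∣ ex a f := by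
  obtain ⟨g, rfl⟩ := h
  rw [map_mul, map_pow, ex, expand_X, ← pow_mul]
  exact dvd_mul_right _ _

lemma order_cc {f : ℤ⟦X⟧} (h : constantCoeff f ≠ 0) : f.order = 0 := by
  by_contra h1
  apply h
  rw [← coeff_zero_eq_constantCoeff_apply]
  apply coeff_of_lt_order
  exact_mod_cast pos_iff_ne_zero.2 h1

lemma desc (E W V : ℤ⟦X⟧) (a b c : ℕ) (h1 : X ^ c ∣ E) (h2 : a < b + c)
    (h3 : E * (X ^ a * W) = ex 2 E * (X ^ b * V)) (hW : constantCoeff W ≠ 0)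
    (hV : constantCoeff V ≠ 0) : E = 0 := by
  by_contra hE
  have h4 := congrArg PowerSeries.order h3
  rw [order_mul, order_mul, order_mul, order_mul, order_cc hW, order_cc hV, ex, order_expand,
    order_X_pow, order_X_pow] at h4
  have h5 : (c : ℕ∞) ≤ E.order := by
    apply le_order
    intro i hi
    exact X_pow_dvd_iff.1 h1 i (by exact_mod_cast hi)
  have h6 : E.order ≠ ⊤ := by rwa [Ne, order_eq_top]
  obtain ⟨m, hm⟩ := ENat.ne_top_iff_exists.1 h6
  rw [← hm] at h4 h5
  simp only [add_zero, nsmul_eq_mul] at h4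
  norm_cast at h4 h5
  omega

lemma nz (n : ℕ) [n.AtLeastTwo] : (OfNat.ofNat n : ℤ⟦X⟧) ≠ 0 := by
  intro h
  have := congrArg (constantCoeff (R := ℤ)) h
  rw [map_ofNat, map_zero] at this
  exact OfNat.ofNat_ne_zero n this

/-! constant terms -/
lemma cS : constantCoeff sS = 1 := by
  have := th_coeff (a := as) (mono_mul mono_sq 8 (by norm_num)) 0
  simpa [as, sS] using this
lemma cP : constantCoeff sP = 1 := by
  have := th_coeff (a := ap) (mono_mul mono_sq 8 (by norm_num)) 0
  simpa [ap, sP] using this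

lemma th_first {a : ℕ → ℤ} {e : ℕ → ℕ} (he : StrictMono e) (h0 : a 0 = 1) :
   ∃ g : ℤ⟦X⟧, th a e = X ^ (e 0) + X ^ (e 1) * g := by
  have : X ^ (e 1) ∣ th a e - X ^ (e 0) := by
    rw [X_pow_dvd_iff]
    intro m hm
    rw [map_sub, coeff_X_pow]
    split_ifs with h
    · rw [h, th_coeff he, h0, sub_self]
    · rw [th_coeff_zero, sub_zero]
      intro k hk
      have : k < 1 := he.lt_iff_lt.1 (by omega)
      interval_cases k
      exact h hk.symm
  obtain ⟨g, hg⟩ := this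
  exact ⟨g, by rw [← hg]; ring⟩

lemma first_S : ∃ g, sS = 1 + X ^ 8 * g := by
  obtain ⟨g, hg⟩ := th_first (a := as) (mono_mul mono_sq 8 (by norm_num)) (by simp [as])
  exact ⟨g, by simpa [sS] using hg⟩
lemma first_P : ∃ g, sP = 1 + X ^ 8 * g := by
  obtain ⟨g, hg⟩ := th_first (a := ap) (mono_mul mono_sq 8 (by norm_num)) (by simp [ap])
  exact ⟨g, by simpa [sP] using hg⟩
lemma first_Q : ∃ g, sQ = X ^ 2 + X ^ 18 * g := by
  obtain ⟨g, hg⟩ := th_first (a := fun _ => 1) (mono_mul mono_odd 2 (by norm_num)) rfl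
  exact ⟨g, by simpa [sQ] using hg⟩
lemma first_R : ∃ g, sR = X + X ^ 9 * g := by
  obtain ⟨g, hg⟩ := th_first (a := ar) mono_odd (by simp [ar])
  exact ⟨g, by simpa [sR] using hg⟩

lemma sP_ne : sP ≠ 0 := by
  intro h; have := cP; simp [h] at this
lemma sS_ne : sS ≠ 0 := by
  intro h; have := cS; simp [h] at this

/-! ### AGM -/
lemma Q'2 : (ex 2 sQ) ^ 2 = ex 4 sS * ex 4 sQ := by
  rw [← map_pow, QQ, map_mul, ex_ex 2 2 4 rfl, ex_ex 2 2 4 rfl, mul_comm]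

lemma S'2 : (ex 2 sS) ^ 2 = (ex 4 sS) ^ 2 + 4 * (ex 4 sQ) ^ 2 := by
  set D := (ex 4 sS) ^ 2 + 4 * (ex 4 sQ) ^ 2 - (ex 2 sS) ^ 2 with hD
  have e1 : D = sS ^ 2 - (ex 2 sS) ^ 2 - 4 * (ex 2 sQ) ^ 2 := by
    rw [Q'2, hD]
    linear_combination (-sS - (ex 4 sS + 2 * ex 4 sQ)) * S_split
  have e2 : ex 2 D = - D := by
    rw [e1]
    simp only [map_sub, map_mul, map_pow, ex_ex 2 2 4 rfl, map_ofNat]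
    rw [← e1, hD]
    ring
  have e3 : D = 0 := by
    ext n
    rcases Nat.eq_zero_or_pos n with rfl | hn
    · rw [hD]
      obtain ⟨g, hg⟩ := first_Q
      have : constantCoeff sQ = 0 := by simp [hg]
      simp [constantCoeff_expand, cS, this]
    · rw [ex2_const (-1) (-1) (by norm_num) D (by simp [e2]) n hn]; simp
  linear_combination -e3

lemma P'2 : (ex 2 sP) ^ 2 = (ex 4 sS) ^ 2 - 4 * (ex 4 sQ) ^ 2 := by
  rw [← PS]
  linear_combination sP * S_split + (ex 4 sS + 2 * ex 4 sQ) * P_split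

lemma SP_add : sS ^ 2 + sP ^ 2 = 2 * (ex 2 sS) ^ 2 := by
  rw [S'2]
  linear_combination (sS + ex 4 sS + 2 * ex 4 sQ) * S_split +
     (sP + ex 4 sS - 2 * ex 4 sQ) * P_split

lemma SP_sub : sS ^ 2 - sP ^ 2 = 8 * (ex 2 sQ) ^ 2 := by
  rw [Q'2]
  linear_combination (sS + ex 4 sS + 2 * ex 4 sQ) * S_split -
     (sP + ex 4 sS - 2 * ex 4 sQ) * P_split

lemma S4 : sS ^ 4 = sP ^ 4 + 16 * sQ ^ 4 := by
  have h : sQ ^ 4 = (ex 2 sQ * ex 2 sS) ^ 2 := by rw [← QQ]; ring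
  rw [h]
  linear_combination (sS ^ 2 - sP ^ 2) * SP_add + 2 * (ex 2 sS) ^ 2 * SP_sub

/-! ### degree 3 -/
lemma E0 : sS * ex 3 sS = sP * ex 3 sP + 4 * sQ * ex 3 sQ := by
  set E := sS * ex 3 sS - sP * ex 3 sP - 4 * sQ * ex 3 sQ with hE
  have s3 := congrArg (ex 3) S_split
  have p3 := congrArg (ex 3) P_split
  have q3 := congrArg (ex 3) QQ
  have qq3 := congrArg (ex 3) Q'2
  have ss3 := congrArg (ex 3) S'2
  have pp3 := congrArg (ex 3) P'2
  have hE2 : ex 2 E = ex 2 sS * ex 6 sS - ex 2 sP * ex 6 sP - 4 * ex 2 sQ * ex 6 sQ := by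
    rw [hE]
    simp only [map_sub, map_mul, map_ofNat, ex_ex 2 3 6 rfl]
  simp only [map_sub, map_mul, map_pow, map_add, map_ofNat, ex_ex 3 2 6 rfl, ex_ex 3 4 12 rfl]
    at s3 p3 q3 qq3 ss3 pp3
  have e1 : E = 4 * (ex 4 sS * ex 12 sQ + ex 4 sQ * ex 12 sS - sQ * ex 3 sQ) := by
    rw [hE, s3, p3]
    linear_combination (ex 12 sS + 2 * ex 12 sQ) * S_split - (ex 12 sS - 2 * ex 12 sQ) * P_split
  have e2 : 2 * E * (ex 4 sS * ex 12 sQ + ex 4 sQ * ex 12 sS + sQ * ex 3 sQ) =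
      ex 2 E * (ex 2 sS * ex 6 sS - 4 * ex 2 sQ * ex 6 sQ + ex 2 sP * ex 6 sP) := by
    rw [hE2, e1]
    have h1 : (sQ * ex 3 sQ) ^ 2 = ex 2 sQ * ex 2 sS * (ex 6 sQ * ex 6 sS) := by
      rw [mul_pow, QQ, q3]
    have h2 : (ex 2 sS * ex 6 sS) ^ 2 = (ex 4 sS ^ 2 + 4 * ex 4 sQ ^ 2) *
        (ex 12 sS ^ 2 + 4 * ex 12 sQ ^ 2) := by
      rw [mul_pow, S'2, ss3]
    have h3 : (ex 2 sP * ex 6 sP) ^ 2 = (ex 4 sS ^ 2 - 4 * ex 4 sQ ^ 2) *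
        (ex 12 sS ^ 2 - 4 * ex 12 sQ ^ 2) := by
      rw [mul_pow, P'2, pp3]
    have h4 : (ex 2 sQ * ex 6 sQ) ^ 2 = (ex 4 sS * ex 4 sQ) *
        (ex 12 sS * ex 12 sQ) := by
      rw [mul_pow, Q'2, qq3]
    linear_combination -8 * h1 - h2 + h3 - 16 * h4
  obtain ⟨gS, hS⟩ := first_S
  obtain ⟨gP, hP⟩ := first_P
  obtain ⟨gQ, hQ⟩ := first_Q
  have hx : ∀ (k : ℕ) [NeZero k], ex k (X : ℤ⟦X⟧) = X ^ k := fun k _ => by rw [ex, expand_X]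
  have base : X ^ 9 ∣ E := by
    rw [e1, hS, hQ]
    simp only [map_add, map_mul, map_pow, hx, map_one]
    refine ⟨4 * ((1 + (X ^ 4) ^ 8 * ex 4 gS) * (X ^ 15 + X ^ 207 * ex 12 gQ) + X ^ 95 * ex 12 gS
      + X ^ 63 * ex 4 gQ * (1 + X ^ 96 * ex 12 gS) - X ^ 47 * ex 3 gQ
      - X ^ 9 * gQ * (X ^ 6 + X ^ 54 * ex 3 gQ)), ?_⟩
    ring
  have hW : ex 4 sS * ex 12 sQ + ex 4 sQ * ex 12 sS + sQ * ex 3 sQ = X ^ 8 * (2 + X * (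
      (1 + (X ^ 4) ^ 8 * ex 4 gS) * (X ^ 15 + X ^ 207 * ex 12 gQ) + X ^ 95 * ex 12 gS
      + X ^ 63 * ex 4 gQ * (1 + X ^ 96 * ex 12 gS) + X ^ 47 * ex 3 gQ
      + X ^ 9 * gQ * (X ^ 6 + X ^ 54 * ex 3 gQ))) := by
    rw [hS, hQ]
    simp only [map_add, map_mul, map_pow, hx, map_one]
    ring
  have : E = 0 := by
    refine desc E (2 * (2 + X * (
      (1 + (X ^ 4) ^ 8 * ex 4 gS) * (X ^ 15 + X ^ 207 * ex 12 gQ) + X ^ 95 * ex 12 gS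
      + X ^ 63 * ex 4 gQ * (1 + X ^ 96 * ex 12 gS) + X ^ 47 * ex 3 gQ
      + X ^ 9 * gQ * (X ^ 6 + X ^ 54 * ex 3 gQ))))
      (ex 2 sS * ex 6 sS - 4 * ex 2 sQ * ex 6 sQ + ex 2 sP * ex 6 sP) 8 0 9 base (by norm_num)
      ?_ ?_ ?_
    · rw [pow_zero, one_mul, ← e2, hW]; ring
    · simp [map_ofNat]
    · have hq : constantCoeff sQ = 0 := by simp [hQ]
      simp [constantCoeff_expand, cS, cP, hq]
  linear_combination this

lemma E1pre : sQ ^ 2 * (ex 3 sP) ^ 2 + sP ^ 2 * (ex 3 sQ) ^ 2 =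
    sR * ex 3 sR * (sP * ex 3 sP + 4 * sQ * ex 3 sQ) := by
  have r3 := congrArg (ex 3) RR
  have s43 := congrArg (ex 3) S4
  simp only [map_mul, map_pow, map_add, map_ofNat] at r3 s43
  have h4 : (sP * ex 3 sP + 4 * sQ * ex 3 sQ) ^ 4 = (sP ^ 4 + 16 * sQ ^ 4) *
      (ex 3 sP ^ 4 + 16 * ex 3 sQ ^ 4) := by
    rw [← E0, mul_pow, S4, s43]
  have h5 : 16 * (sQ ^ 2 * (ex 3 sP) ^ 2 + sP ^ 2 * (ex 3 sQ) ^ 2) ^ 2 =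
     16 * (sR * ex 3 sR * (sP * ex 3 sP + 4 * sQ * ex 3 sQ)) ^ 2 := by
    have : (sR * ex 3 sR) ^ 2 = sP * sQ * (ex 3 sP * ex 3 sQ) := by rw [mul_pow, RR, r3]
    rw [mul_pow (sR * ex 3 sR), this]
    linear_combination -h4
  have h6 := mul_left_cancel₀ (nz 16) h5
  rcases sq_eq_sq_iff_eq_or_eq_neg.1 h6 with h | h
  · exact h
  exfalso
  obtain ⟨gR, hR⟩ := first_R
  obtain ⟨gP, hP⟩ := first_P
  obtain ⟨gQ, hQ⟩ := first_Q
  have hx : ∀ (k : ℕ) [NeZero k], ex k (X : ℤ⟦X⟧) = X ^ k := fun k _ => by rw [ex, expand_X]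
  rw [hQ, hR, hP] at h
  simp only [map_add, map_mul, map_pow, hx, map_one] at h
  have h7 : (X : ℤ⟦X⟧) ^ 4 * ((1 + X ^ 16 * gQ) ^ 2 * (1 + (X ^ 3) ^ 8 * ex 3 gP) ^ 2 +
      X ^ 8 * ((1 + X ^ 8 * gP) * (1 + X ^ 48 * ex 3 gQ)) ^ 2 +
      (1 + X ^ 8 * gR) * (1 + X ^ 24 * ex 3 gR) * ((1 + X ^ 8 * gP) * (1 + (X ^ 3) ^ 8 * ex 3 gP)
       + 4 * X ^ 8 * (1 + X ^ 16 * gQ) * (1 + X ^ 48 * ex 3 gQ))) = X ^ 4 * 0 := by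
    linear_combination h
  have h8 := congrArg constantCoeff (mul_left_cancel₀ (pow_ne_zero 4 X_ne_zero) h7)
  simp at h8

lemma Q_F : sQ = sF ^ 2 * sP := by
  apply mul_left_cancel₀ sP_ne
  rw [← RR, ← FP]; ring

lemma E1 : sF ^ 4 + (ex 3 sF) ^ 4 = sF * ex 3 sF + 4 * sF ^ 3 * (ex 3 sF) ^ 3 := by
  have h := E1pre
  rw [Q_F, ← FP] at h
  simp only [map_mul, map_pow] at h
  have n3 : ex 3 sP ≠ 0 := by
    intro h
    have := congrArg constantCoeff h
    simp [constantCoeff_expand, cP] at this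
  apply mul_left_cancel₀ (mul_ne_zero (pow_ne_zero 2 sP_ne) (pow_ne_zero 2 n3))
  linear_combination h
end B4

open PowerSeries Finset
namespace B4

/-- The derivation `X d/dX` -/
noncomputable def Th {R : Type*} [CommRing R] : Derivation R R⟦X⟧ R⟦X⟧ :=
  (X : R⟦X⟧) • PowerSeries.derivative R

section
variable {R : Type*} [CommRing R]

lemma coeff_Th (f : R⟦X⟧) (n : ℕ) : coeff n (Th f) = n * coeff n f := by
  rw [Th, Derivation.smul_apply, smul_eq_mul]
  cases n with
  | zero => simp
  | succ n => rw [coeff_succ_X_mul, coeff_derivative]; push_cast; ring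

lemma Th_mul (f g : R⟦X⟧) : Th (f * g) = f * Th g + g * Th f := by
  simp [Derivation.leibniz]

lemma Th_pow (f : R⟦X⟧) (n : ℕ) : Th (f ^ n) = n * f ^ (n - 1) * Th f := by
  rw [Derivation.leibniz_pow]; simp [mul_assoc]

lemma Th_X : Th (X : R⟦X⟧) = X := by
  ext n
  rw [coeff_Th, coeff_X]
  split_ifs with h <;> simp [h]

lemma Th_ex (k : ℕ) [NeZero k] (f : R⟦X⟧) : Th (ex k f) = k * ex k (Th f) := by
  ext n
  rw [coeff_Th, ← map_natCast (C (R := R)), coeff_C_mul, ex, coeff_expand, coeff_expand]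
  split_ifs with h
  · obtain ⟨m, rfl⟩ := h
    rw [Nat.mul_div_cancel_left _ (Nat.pos_of_ne_zero (NeZero.ne k)), coeff_Th]
    push_cast; ring
  · simp

lemma Th_ofNat (n : ℕ) [n.AtLeastTwo] : Th (OfNat.ofNat n : R⟦X⟧) = 0 :=
  Derivation.map_natCast (Th (R := R)) n
lemma Th_two : Th (2 : R⟦X⟧) = 0 := Th_ofNat 2
lemma Th_sixteen : Th (16 : R⟦X⟧) = 0 := Th_ofNat 16
lemma Th_four : Th (4 : R⟦X⟧) = 0 := Th_ofNat 4
end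

lemma hX (k : ℕ) [NeZero k] : ex k (X : ℤ⟦X⟧) = X ^ k := by rw [ex, expand_X]

lemma w_eq : sS * Th sP - sP * Th sS = - 32 * sS * sP * sQ ^ 4 := by
  set w := sS * Th sP - sP * Th sS with hw
  set Z := w + 32 * sS * sP * sQ ^ 4 with hZ
  have h1 := congrArg Th PS
  have h2 := congrArg Th SP_add
  have hw2 : 2 * ex 2 w = ex 2 sS * Th (ex 2 sP) - ex 2 sP * Th (ex 2 sS) := by
    rw [hw, map_sub, map_mul, map_mul, Th_ex, Th_ex]; push_cast; ring
  simp only [Th_two, Th_sixteen, map_add, Th_mul, Th_pow, Th_two] at h1 h2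
  push_cast at h1 h2
  norm_num at h1 h2
  have e1 : ex 2 sS * ex 2 sP * ex 2 w = (ex 2 sQ) ^ 2 * w := by
    apply mul_left_cancel₀ (nz 8)
    linear_combination 4 * ex 2 sS * ex 2 sP * hw2 - 2 * (ex 2 sS) ^ 2 * h1
     + (ex 2 sP) ^ 2 * h2 - (sP * Th sS + sS * Th sP) * SP_add
     + (2 * sS * Th sS + 2 * sP * Th sP) * PS + w * SP_sub
  have e2 : Z * (ex 2 sQ) ^ 2 = ex 2 Z * (ex 2 sS * ex 2 sP) := by
    rw [hZ]
    simp only [map_add, map_mul, map_pow, map_ofNat]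
    linear_combination - e1 + 32 * sS * sP * (ex 2 sQ) ^ 2 * (sQ ^ 2 + ex 2 sQ * ex 2 sS) * QQ
      + 32 * (ex 2 sQ) ^ 4 * (ex 2 sS) ^ 2 * PS
  obtain ⟨gS, hS⟩ := first_S
  obtain ⟨gQ, hQ⟩ := first_Q
  have hS4 := congrArg (ex 4) hS
  have hQ4 := congrArg (ex 4) hQ
  simp only [map_add, map_mul, map_pow, map_one, hX] at hS4 hQ4
  have s1 : sS = 1 + 2 * X ^ 8 + X ^ 32 * (ex 4 gS + 2 * X ^ 40 * ex 4 gQ) := by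
    rw [S_split, hS4, hQ4]; ring
  have p1 : sP = 1 - 2 * X ^ 8 + X ^ 32 * (ex 4 gS - 2 * X ^ 40 * ex 4 gQ) := by
    rw [P_split, hS4, hQ4]; ring
  set u := ex 4 gS + 2 * X ^ 40 * ex 4 gQ
  set v := ex 4 gS - 2 * X ^ 40 * ex 4 gQ
  have ts : Th sS = 16 * X ^ 8 + X ^ 32 * (32 * u + Th u) := by
    rw [s1]
    simp only [map_add, Th_mul, Th_two, Th_sixteen, Th_pow, Th_X, Derivation.map_one_eq_zero]
    push_cast; ring
  have tp : Th sP = - 16 * X ^ 8 + X ^ 32 * (32 * v + Th v) := by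
    rw [p1]
    simp only [map_add, map_sub, Th_mul, Th_two, Th_sixteen, Th_pow, Th_X, Derivation.map_one_eq_zero]
    push_cast; ring
  have base : X ^ 9 ∣ Z := by
    have : Z = (-32 * X ^ 8 + 32 * X ^ 8) + X ^ 9 * (X ^ 23 * (sS * (32 * v + Th v)
      - sP * (32 * u + Th u)) - 16 * X ^ 31 * (u + v) +
      32 * X ^ 7 * (1 + X ^ 16 * gQ) ^ 4 * ((2 + X ^ 24 * u) * sP + (-2 + X ^ 24 * v)) +
      32 * X ^ 15 * gQ * ((1 + X ^ 16 * gQ) ^ 3 + (1 + X ^ 16 * gQ) ^ 2 + (1 + X ^ 16 * gQ) + 1)) := by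
      rw [hZ, hw, ts, tp, s1, p1, hQ]
      ring
    rw [this]
    rw [show (-32 * X ^ 8 + 32 * X ^ 8 : ℤ⟦X⟧) = 0 by ring, zero_add]
    exact dvd_mul_right _ _
  have hQ2 := congrArg (ex 2) hQ
  simp only [map_add, map_mul, map_pow, hX] at hQ2
  have : Z = 0 := by
    refine desc Z ((1 + X ^ 32 * ex 2 gQ) ^ 2) (ex 2 sS * ex 2 sP) 8 0 9 base (by norm_num) ?_ ?_ ?_
    · rw [pow_zero, one_mul, ← e2, hQ2]; ring
    · simp
    · simp [constantCoeff_expand, cS, cP]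
  linear_combination this

lemma S4F : sS ^ 4 = sP ^ 4 * (1 + 16 * sF ^ 8) := by
  rw [S4, Q_F]; ring

lemma first_F : ∃ g, sF = X + X ^ 2 * g := by
  have h : constantCoeff gB = 1 := by
    have := congrArg constantCoeff gB_rel
    have e1 := th_coeff (a := ap) mono_sq 0
    have e2 := th_coeff (a := ar) mono_tri 0
    simp [ap, ar] at e1 e2
    rw [map_mul, e1, e2] at this
    simpa using this
  have h1 : X ∣ ex 8 gB - 1 := by
    rw [X_dvd_iff]; simp [constantCoeff_expand, h]
  obtain ⟨g, hg⟩ := h1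
  exact ⟨g, by rw [sF]; linear_combination X * hg⟩

lemma sF_ne : sF ≠ 0 := by
  obtain ⟨g, hg⟩ := first_F
  intro h
  rw [hg] at h
  have := congrArg (coeff 1) h
  simp [coeff_X_pow_mul'] at this

lemma ThF : Th sF = sF * (sP ^ 4 * (1 + 16 * sF ^ 8)) := by
  have h1 := congrArg Th S4F
  simp only [map_add, Th_two, Th_sixteen, Th_mul, Th_pow, Derivation.map_one_eq_zero] at h1
  push_cast at h1
  norm_num at h1
  have hw := w_eq
  have hq : sQ ^ 4 = sF ^ 8 * sP ^ 4 := by rw [Q_F]; ring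
  rw [hq] at hw
  apply mul_left_cancel₀ (mul_ne_zero (nz 128) (mul_ne_zero (pow_ne_zero 7 sF_ne)
    (pow_ne_zero 5 sP_ne)))
  have h2 := S4F
  linear_combination -sP * h1 + 4 * Th sP * h2 - 4 * sS ^ 3 * hw + 128 * sF ^ 8 * sP ^ 5 * h2
end B4

open PowerSeries Finset
namespace B4

lemma ne_of_first (f g : ℤ⟦X⟧) (c : ℤ) (k : ℕ) (hc : c ≠ 0)
    (h : f = C c * X ^ k + X ^ (k + 1) * g) : f ≠ 0 := by
  intro h0
  have := congrArg (coeff k) (h.symm.trans h0)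
  rw [map_add, coeff_C_mul, coeff_X_pow_self, coeff_X_pow_mul', if_neg (by omega)] at this
  simp at this
  exact hc this

lemma first_F3 : ∃ g, ex 3 sF = X ^ 3 + X ^ 4 * g := by
  obtain ⟨g, hg⟩ := first_F
  refine ⟨X ^ 2 * ex 3 g, ?_⟩
  have := congrArg (ex 3) hg
  simp only [map_add, map_mul, map_pow, hX] at this
  rw [this]; ring

lemma F3_ne : ex 3 sF ≠ 0 := by
  obtain ⟨g, hg⟩ := first_F3
  exact ne_of_first _ g 1 3 one_ne_zero (by rw [hg]; simp)

lemma E6 : sP ^ 2 * sF = (ex 3 sP) ^ 2 * (sF - 4 * (ex 3 sF) ^ 3) := by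
  have h1 := congrArg Th E1
  simp only [map_add, Th_four, Th_mul, Th_pow, Th_ex] at h1
  push_cast at h1
  norm_num at h1
  rw [ThF] at h1
  simp only [map_add, map_mul, map_pow, map_one, map_ofNat] at h1
  obtain ⟨a, ha⟩ := first_F
  obtain ⟨b, hb⟩ := first_F3
  obtain ⟨c, hc⟩ := first_P
  have hc3 := congrArg (ex 3) hc
  simp only [map_add, map_mul, map_pow, map_one, hX] at hc3
  have e1 := E1
  have hne1 : sF + 12 * sF ^ 3 * (ex 3 sF) ^ 2 - 4 * (ex 3 sF) ^ 3 ≠ 0 := by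
    refine ne_of_first _ (a + 12 * X ^ 7 * (1 + X * a) ^ 3 * (1 + X * b) ^ 2
      - 4 * X ^ 7 * (1 + X * b) ^ 3) 1 1 one_ne_zero ?_
    rw [hb, ha, map_one]; ring
  have hne2 : 1 + 16 * (ex 3 sF) ^ 8 ≠ 0 := by
    refine ne_of_first _ (16 * X ^ 23 * (1 + X * b) ^ 8) 1 0 one_ne_zero ?_
    rw [hb, map_one]; ring
  have hne3 : sP ^ 2 * sF + (ex 3 sP) ^ 2 * (sF - 4 * (ex 3 sF) ^ 3) ≠ 0 := by
    refine ne_of_first _ (a + (1 + X * a) * (2 * X ^ 7 * c + X ^ 15 * c ^ 2)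
      + (a - 4 * X ^ 7 * (1 + X * b) ^ 3)
      + (1 + X * a - 4 * X ^ 8 * (1 + X * b) ^ 3) * (2 * X ^ 23 * ex 3 c + X ^ 47 * (ex 3 c) ^ 2)) 2 1 two_ne_zero ?_
    rw [hb, hc3, ha, hc, map_ofNat]; ring
  set s := sF
  set t := ex 3 sF
  set P := sP
  set P3 := ex 3 sP
  have h2 : (3 * t * (s + 12 * s ^ 3 * t ^ 2 - 4 * t ^ 3) * (1 + 16 * t ^ 8)) *
     ((P ^ 2 * s + P3 ^ 2 * (s - 4 * t ^ 3)) * (P ^ 2 * s - P3 ^ 2 * (s - 4 * t ^ 3))) = 0 := by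
    linear_combination (s - 4 * t ^ 3) ^ 2 * h1 - P ^ 4 * ((-16)*s^1*t^3 + (4)*s^2*t^0 + (192)*s^2*t^8 + (-48)*s^3*t^5 + (48)*s^4*t^2 + (192)*s^5*t^7 + (-192)*s^6*t^4 + (48)*s^7*t^1 + (768)*s^8*t^6 + (-448)*s^9*t^3 + (64)*s^10*t^0) * e1
  rcases mul_eq_zero.1 h2 with h | h
  · exact absurd h (mul_ne_zero (mul_ne_zero (mul_ne_zero (nz 3) F3_ne) hne1) hne2)
  · rcases mul_eq_zero.1 h with h | h
    · exact absurd h hne3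
    · exact sub_eq_zero.1 h

lemma E4 : 4 * sF ^ 3 * sP ^ 2 = ex 3 sF * (sP ^ 2 + 3 * (ex 3 sP) ^ 2) := by
  apply mul_left_cancel₀ sF_ne
  linear_combination (4 * sF ^ 3 - ex 3 sF) * E6 + 4 * (ex 3 sP) ^ 2 * E1

lemma E7 : (ex 3 sP) ^ 2 * sF * ex 3 sF = (ex 3 sP) ^ 2 * (ex 3 sF) ^ 4 + sP ^ 2 * sF ^ 4 := by
  linear_combination - sF ^ 3 * E6 - (ex 3 sP) ^ 2 * E1

lemma E5 : sP ^ 2 * sF * ex 3 sF = sP ^ 2 * sF ^ 4 - 3 * (ex 3 sF) ^ 4 * (ex 3 sP) ^ 2 := by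
  linear_combination (ex 3 sF - sF ^ 3) * E6 - (ex 3 sP) ^ 2 * E1
end B4

open PowerSeries Finset
namespace B4

section
variable {R : Type*} [CommRing R]

/-- `U_p` -/
noncomputable def U (p : ℕ) : R⟦X⟧ →ₗ[R] R⟦X⟧ where
  toFun f := PowerSeries.mk fun n => coeff (p * n) f
  map_add' f g := by ext n; simp
  map_smul' c f := by ext n; simp

lemma coeff_U (p n : ℕ) (f : R⟦X⟧) : coeff n (U p f) = coeff (p * n) f := by
  simp [U]

lemma U_mul_ex (p : ℕ) [NeZero p] (f g : R⟦X⟧) : U p (f * ex p g) = g * U p f := by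
  have hp : 0 < p := Nat.pos_of_ne_zero (NeZero.ne p)
  ext n
  rw [coeff_U, mul_comm g, coeff_mul, coeff_mul]
  symm
  have inj : Function.Injective (fun x : ℕ × ℕ => (p * x.1, p * x.2)) := by
    rintro ⟨a, b⟩ ⟨c, d⟩ h
    simp only [Prod.mk.injEq] at h
    rw [Nat.eq_of_mul_eq_mul_left hp h.1, Nat.eq_of_mul_eq_mul_left hp h.2]
  rw [← Finset.sum_subset (s₁ := (antidiagonal n).map ⟨_, inj⟩) (s₂ := antidiagonal (p * n))]
  · rw [Finset.sum_map]
    refine Finset.sum_congr rfl fun x _ => ?_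
    simp only [Function.Embedding.coeFn_mk, coeff_U, ex, coeff_expand]
    rw [if_pos (dvd_mul_right _ _), Nat.mul_div_cancel_left _ hp]
  · intro x hx
    simp only [Finset.mem_map, HasAntidiagonal.mem_antidiagonal, Function.Embedding.coeFn_mk] at hx ⊢
    obtain ⟨a, ha, rfl⟩ := hx
    simp only
    rw [← mul_add, ha]
  · rintro ⟨a, b⟩ hx hn
    simp only [HasAntidiagonal.mem_antidiagonal] at hx
    simp only [ex, coeff_expand]
    rw [if_neg, mul_zero]
    rintro ⟨d, rfl⟩
    apply hn
    have : p ∣ a := (Nat.dvd_add_left (dvd_mul_right p d)).1 (hx ▸ dvd_mul_right p n)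
    obtain ⟨c, rfl⟩ := this
    simp only [Finset.mem_map, HasAntidiagonal.mem_antidiagonal, Function.Embedding.coeFn_mk]
    refine ⟨(c, d), ?_, rfl⟩
    rw [← mul_add] at hx
    exact Nat.eq_of_mul_eq_mul_left hp hx

lemma U_ex_mul (p : ℕ) [NeZero p] (f g : R⟦X⟧) : U p (ex p g * f) = g * U p f := by
  rw [mul_comm, U_mul_ex]

lemma U_one (p : ℕ) [NeZero p] : U p (1 : R⟦X⟧) = 1 := by
  ext n
  rw [coeff_U, coeff_one, coeff_one]
  simp [NeZero.ne p]

lemma U_ex (p : ℕ) [NeZero p] (f : R⟦X⟧) : U p (ex p f) = f := by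
  have := U_ex_mul p 1 f
  rwa [mul_one, U_one, mul_one] at this

/-- supported on a residue class mod 3 -/
def Sup (r : ℕ) (f : R⟦X⟧) : Prop := ∀ n, n % 3 ≠ r % 3 → coeff n f = 0

lemma Sup.mul {r s : ℕ} {f g : R⟦X⟧} (hf : Sup r f) (hg : Sup s g) : Sup (r + s) (f * g) := by
  intro n hn
  rw [coeff_mul]
  refine Finset.sum_eq_zero fun x hx => ?_
  rw [HasAntidiagonal.mem_antidiagonal] at hx
  by_cases h : x.1 % 3 = r % 3
  · rw [hg x.2 (by omega), mul_zero]
  · rw [hf _ h, zero_mul]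

lemma Sup.U {r : ℕ} {f : R⟦X⟧} (hf : Sup r f) (hr : r % 3 ≠ 0) : U 3 f = 0 := by
  ext n
  rw [coeff_U, hf _ (by omega), map_zero]
end

lemma th_tri {a : ℕ → ℤ} {e : ℕ → ℕ} (he : StrictMono e) (ε : ℤ) (m r : ℕ) (hm : m < 3)
    (he3 : ∀ j, e (3 * j + m) = 9 * e j) (ha3 : ∀ j, a (3 * j + m) = ε * a j)
    (her : ∀ k, k % 3 ≠ m → e k % 3 = r % 3) :
    ∃ g, th a e = C ε * ex 9 (th a e) + g ∧ Sup r g := by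
  refine ⟨th a e - C ε * ex 9 (th a e), by ring, ?_⟩
  intro n hn
  rw [map_sub, coeff_C_mul, ex, th_expand he]
  have h9 : StrictMono (fun k => 9 * e k) := mono_mul he 9 (by norm_num)
  by_cases h : ∃ k, e k = n
  · obtain ⟨k, rfl⟩ := h
    have hk : k % 3 = m := by
      by_contra h; exact hn (her k h)
    obtain ⟨j, rfl⟩ : ∃ j, k = 3 * j + m := ⟨k / 3, by omega⟩
    rw [th_coeff he, ha3, he3]
    have := th_coeff (a := a) h9 j
    rw [this, sub_self]
  · push Not at h
    rw [th_coeff_zero n h, th_coeff_zero n, mul_zero, sub_self]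
    intro k hk
    exact h (3 * k + m) (by rw [he3, hk])

lemma tri_P : ∃ g, sP = ex 9 sP + g ∧ Sup 2 g := by
  have := th_tri (a := ap) (e := fun k => 8 * k ^ 2) (mono_mul mono_sq 8 (by norm_num)) 1 0 2
    (by norm_num) (by intro j; ring) ?_ ?_
  · simpa [sP] using this
  · intro j
    simp only [ap]
    rcases j with _ | j
    · simp
    · rw [if_neg (by omega), if_neg (by omega), show 3 * (j + 1) + 0 = 2 * (j + 1) + (j + 1) by ring,
        pow_add, pow_mul]; simp
  · intro k hk
    have : k % 3 = 1 ∨ k % 3 = 2 := by omega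
    rcases this with h | h <;> simp [Nat.mul_mod, Nat.pow_mod, h]

lemma tri_Q : ∃ g, sQ = ex 9 sQ + g ∧ Sup 2 g := by
  have := th_tri (a := fun _ => 1) (e := fun k => 2 * (2 * k + 1) ^ 2)
    (mono_mul mono_odd 2 (by norm_num)) 1 1 2
    (by norm_num) (by intro j; ring) (by simp) ?_
  · simpa [sQ] using this
  · intro k hk
    have : k % 3 = 0 ∨ k % 3 = 2 := by omega
    rcases this with h | h <;> simp [Nat.mul_mod, Nat.pow_mod, Nat.add_mod, h]

lemma tri_R : ∃ g, sR = - ex 9 sR + g ∧ Sup 1 g := by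
  have := th_tri (a := ar) (e := fun k => (2 * k + 1) ^ 2)
    mono_odd (-1) 1 1
    (by norm_num) (by intro j; ring) ?_ ?_
  · simpa [sR] using this
  · intro j
    simp only [ar]
    have : (3 * j + 1) * (3 * j + 1 + 1) / 2 = 2 * (4 * (j * (j + 1) / 2)) + j * (j + 1) / 2 + 1 := by
      obtain ⟨c, hc⟩ := Nat.even_mul_succ_self j
      have e : (3 * j + 1) * (3 * j + 1 + 1) = 9 * (j * (j + 1)) + 2 := by ring
      rw [e, hc]; omega
    rw [this, pow_succ, pow_add, pow_mul]; simp
  · intro k hk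
    have : k % 3 = 0 ∨ k % 3 = 2 := by omega
    rcases this with h | h <;> simp [Nat.mul_mod, Nat.pow_mod, Nat.add_mod, h]

lemma ex9 (f : ℤ⟦X⟧) : ex 9 f = ex 3 (ex 3 f) := (ex_ex 3 3 9 (by norm_num) f).symm

lemma U_P : U 3 sP = ex 3 sP := by
  obtain ⟨g, h, hg⟩ := tri_P
  conv_lhs => rw [h]
  rw [map_add, ex9, U_ex, hg.U (by norm_num), add_zero]

lemma U_R : U 3 sR = - ex 3 sR := by
  obtain ⟨g, h, hg⟩ := tri_R
  conv_lhs => rw [h]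
  rw [map_add, map_neg, ex9, U_ex, hg.U (by norm_num), add_zero]

lemma U_sq (f g : ℤ⟦X⟧) (ε : ℤ⟦X⟧) (hε : ε = 1 ∨ ε = -1) (r : ℕ) (h : f = ε * ex 9 f + g)
    (hg : Sup r g) (hr : r % 3 ≠ 0) : U 3 (f ^ 2) = (ex 3 f) ^ 2 := by
  have h2 : f ^ 2 = ex 3 ((ex 3 f) ^ 2) + ex 3 (2 * ε * ex 3 f) * g + g * g := by
    conv_lhs => rw [h, ex9]
    rcases hε with rfl | rfl <;> simp only [map_mul, map_pow, map_ofNat, map_neg, map_one] <;> ring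
  rw [h2, map_add, map_add, U_ex, U_ex_mul, hg.U hr, (hg.mul hg).U (by omega)]
  ring

lemma U_P2 : U 3 (sP ^ 2) = (ex 3 sP) ^ 2 := by
  obtain ⟨g, h, hg⟩ := tri_P
  exact U_sq _ g 1 (Or.inl rfl) 2 (by rwa [one_mul]) hg (by norm_num)
lemma U_Q2 : U 3 (sQ ^ 2) = (ex 3 sQ) ^ 2 := by
  obtain ⟨g, h, hg⟩ := tri_Q
  exact U_sq _ g 1 (Or.inl rfl) 2 (by rwa [one_mul]) hg (by norm_num)
lemma U_R2 : U 3 (sR ^ 2) = (ex 3 sR) ^ 2 := by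
  obtain ⟨g, h, hg⟩ := tri_R
  exact U_sq _ g (-1) (Or.inr rfl) 1 (by rwa [neg_one_mul]) hg (by norm_num)

/-- the numerator of the Hecke operator -/
noncomputable def NN (k a : ℕ) : ℤ⟦X⟧ :=
  3 * U 3 (sP ^ (2 * k) * sF ^ a) + (-3) ^ k * ex 3 (sP ^ (2 * k) * sF ^ a)

lemma U_int (c : ℤ) (f : ℤ⟦X⟧) : U 3 ((c : ℤ⟦X⟧) * f) = c * U 3 f := by
  rw [← zsmul_eq_mul, ← zsmul_eq_mul, map_zsmul]

lemma U_ofNat (c : ℕ) [c.AtLeastTwo] (f : ℤ⟦X⟧) :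
    U 3 ((OfNat.ofNat c : ℤ⟦X⟧) * f) = OfNat.ofNat c * U 3 f := by
  have := U_int (OfNat.ofNat c) f
  simpa using this

lemma N1 (k j : ℕ) : NN (k + 1) (j + 1) =
    sP ^ 2 * NN k (j + 1) - 4 * sP ^ 2 * sF ^ 3 * NN k j := by
  have h : sP ^ (2 * (k + 1)) * sF ^ (j + 1) = ex 3 (sP ^ 2) * (sP ^ (2 * k) * sF ^ (j + 1))
    - 4 * (ex 3 (sP ^ 2 * sF ^ 3) * (sP ^ (2 * k) * sF ^ j)) := by
    simp only [map_mul, map_pow]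
    linear_combination sP ^ (2 * k) * sF ^ j * E6
  have hu : U 3 (sP ^ (2 * (k + 1)) * sF ^ (j + 1)) = sP ^ 2 * U 3 (sP ^ (2 * k) * sF ^ (j + 1))
    - 4 * (sP ^ 2 * sF ^ 3 * U 3 (sP ^ (2 * k) * sF ^ j)) := by
    rw [h, map_sub, U_ofNat, U_ex_mul, U_ex_mul]
  rw [NN, NN, NN, hu]
  simp only [map_mul, map_pow]
  linear_combination (-3) ^ k * (ex 3 sP) ^ (2 * k) * (ex 3 sF) ^ j * E4

lemma N2 (k j : ℕ) : NN (k + 1) (j + 4) =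
    sP ^ 2 * (sF * NN k (j + 1) - sF ^ 4 * NN k j) := by
  have h : sP ^ (2 * (k + 1)) * sF ^ (j + 4) = ex 3 (sP ^ 2 * sF) * (sP ^ (2 * k) * sF ^ (j + 1))
    - ex 3 (sP ^ 2 * sF ^ 4) * (sP ^ (2 * k) * sF ^ j) := by
    simp only [map_mul, map_pow]
    linear_combination -sP ^ (2 * k) * sF ^ j * E7
  have hu : U 3 (sP ^ (2 * (k + 1)) * sF ^ (j + 4)) = sP ^ 2 * sF * U 3 (sP ^ (2 * k) * sF ^ (j + 1))
    - sP ^ 2 * sF ^ 4 * U 3 (sP ^ (2 * k) * sF ^ j) := by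
    rw [h, map_sub, U_ex_mul, U_ex_mul]
  rw [NN, NN, NN, hu]
  simp only [map_mul, map_pow]
  linear_combination -(-3) ^ k * (ex 3 sP) ^ (2 * k) * (ex 3 sF) ^ j * E5

lemma N3 (k : ℕ) : sF * NN (k + 1) 0 = 4 * NN (k + 1) 3 - 3 * (sF * sP ^ 2 * NN k 0) := by
  have h : 4 * (sP ^ (2 * (k + 1)) * sF ^ 3) = ex 3 sF * (sP ^ (2 * (k + 1)) * sF ^ 0)
    + 3 * (ex 3 (sF * sP ^ 2) * (sP ^ (2 * k) * sF ^ 0)) := by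
    simp only [map_mul, map_pow]
    linear_combination sP ^ (2 * k) * E4
  have hu := congrArg (U 3) h
  rw [U_ofNat, map_add, U_ex_mul, U_ofNat, U_ex_mul] at hu
  rw [NN, NN, NN]
  simp only [map_mul, map_pow]
  linear_combination -3 * hu + 3 * (-3) ^ k * (ex 3 sP) ^ (2 * k) * E6

lemma N4 (k j : ℕ) : NN (k + 1) (j + 4) =
    sF * NN (k + 1) (j + 1) + 3 * (sF ^ 4 * sP ^ 2 * NN k j) := by
  have h : sP ^ (2 * (k + 1)) * sF ^ (j + 4) = ex 3 sF * (sP ^ (2 * (k + 1)) * sF ^ (j + 1))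
    + 3 * (ex 3 (sF ^ 4 * sP ^ 2) * (sP ^ (2 * k) * sF ^ j)) := by
    simp only [map_mul, map_pow]
    linear_combination - sP ^ (2 * k) * sF ^ j * E5
  have hu := congrArg (U 3) h
  rw [map_add, U_ex_mul, U_ofNat, U_ex_mul] at hu
  rw [NN, NN, NN]
  simp only [map_mul, map_pow]
  linear_combination 3 * hu + 3 * (-3) ^ k * (ex 3 sP) ^ (2 * k) * (ex 3 sF) ^ j * E7

lemma N00 : NN 0 0 = 4 := by
  rw [NN]; simp [U_one]; norm_num
lemma N10 : NN 1 0 = 0 := by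
  rw [NN]; simp [U_P2]
lemma N12 : NN 1 2 = 0 := by
  have : sP ^ (2 * 1) * sF ^ 2 = sR ^ 2 := by rw [← FP]; ring
  rw [NN, this, U_R2, map_pow]; ring
lemma N14 : NN 1 4 = 0 := by
  have : sP ^ (2 * 1) * sF ^ 4 = sQ ^ 2 := by rw [Q_F]; ring
  rw [NN, this, U_Q2, map_pow]; ring
lemma N13 : NN 1 3 = 3 * (sF * sP ^ 2) := by
  have := N3 0
  rw [zero_add, N10, N00] at this
  apply mul_left_cancel₀ (nz 4)
  linear_combination -this
lemma N11 : NN 1 1 = -12 * (sP ^ 2 * sF ^ 3) := by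
  have := N4 0 0
  rw [zero_add, zero_add, N14, N00] at this
  apply mul_left_cancel₀ sF_ne
  linear_combination -this
end B4

open PowerSeries Finset
namespace B4

/-- span of `P^(2 * k) F^i`, `i ≤ d`, `i ≡ c mod 8` -/
noncomputable def W (k c d : ℕ) : Submodule ℤ ℤ⟦X⟧ :=
  Submodule.span ℤ {f | ∃ i, i ≤ d ∧ i % 8 = c % 8 ∧ f = sP ^ (2 * k) * sF ^ i}

lemma W_gen (k c d i : ℕ) (h1 : i ≤ d) (h2 : i % 8 = c % 8) : sP ^ (2 * k) * sF ^ i ∈ W k c d :=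
  Submodule.subset_span ⟨i, h1, h2, rfl⟩

lemma W_mul (g : ℤ⟦X⟧) (k c d k' c' d' : ℕ)
    (h : ∀ i, i ≤ d → i % 8 = c % 8 → g * (sP ^ (2 * k) * sF ^ i) ∈ W k' c' d')
    (f : ℤ⟦X⟧) (hf : f ∈ W k c d) : g * f ∈ W k' c' d' := by
  have : W k c d ≤ (W k' c' d').comap (LinearMap.mulLeft ℤ g) := by
    refine Submodule.span_le.2 ?_
    rintro _ ⟨i, h1, h2, rfl⟩
    exact h i h1 h2
  exact this hf

lemma W_mono (k c d c' d' : ℕ) (hc : c % 8 = c' % 8)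
    (h : ∀ i, i ≤ d → i % 8 = c % 8 → i ≤ d') : W k c d ≤ W k c' d' := by
  refine Submodule.span_le.2 ?_
  rintro _ ⟨i, h1, h2, rfl⟩
  exact W_gen _ _ _ _ (h i h1 h2) (h2.trans hc)

lemma W_PF (k c d m c' d' : ℕ) (hc : (c + m) % 8 = c' % 8) (hd : d + m ≤ d')
    (f : ℤ⟦X⟧) (hf : f ∈ W k c d) : sF ^ m * sP ^ 2 * f ∈ W (k + 1) c' d' := by
  refine W_mul _ k c d _ _ _ ?_ f hf
  intro i h1 h2
  rw [show sF ^ m * sP ^ 2 * (sP ^ (2 * k) * sF ^ i) = sP ^ (2 * (k + 1)) * sF ^ (i + m) by ring]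
  exact W_gen _ _ _ _ (by omega) (by omega)

lemma W_F (k c d m c' d' : ℕ) (hc : (c + m) % 8 = c' % 8) (hd : d + m ≤ d')
    (f : ℤ⟦X⟧) (hf : f ∈ W k c d) : sF ^ m * f ∈ W k c' d' := by
  refine W_mul _ k c d _ _ _ ?_ f hf
  intro i h1 h2
  rw [show sF ^ m * (sP ^ (2 * k) * sF ^ i) = sP ^ (2 * k) * sF ^ (i + m) by ring]
  exact W_gen _ _ _ _ (by omega) (by omega)

lemma W_cancel (k d : ℕ) (f : ℤ⟦X⟧) (hf : sF * f ∈ W k 1 d) : f ∈ W k 0 d := by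
  have : W k 1 d ≤ (W k 0 d).map (LinearMap.mulLeft ℤ sF) := by
    refine Submodule.span_le.2 ?_
    rintro _ ⟨i, h1, h2, rfl⟩
    obtain ⟨j, rfl⟩ : ∃ j, i = j + 1 := ⟨i - 1, by omega⟩
    refine ⟨sP ^ (2 * k) * sF ^ j, W_gen _ _ _ _ (by omega) (by omega), ?_⟩
    simp only [LinearMap.mulLeft_apply]; ring
  obtain ⟨y, hy, h⟩ := this hf
  rw [LinearMap.mulLeft_apply] at h
  rwa [← mul_left_cancel₀ sF_ne h]

lemma W_ofNat (k c d n : ℕ) [n.AtLeastTwo] (f : ℤ⟦X⟧) (hf : f ∈ W k c d) :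
    OfNat.ofNat n * f ∈ W k c d := by
  have := (W k c d).nsmul_mem hf n
  rw [nsmul_eq_mul] at this
  exact this

theorem claim (k : ℕ) : ∀ a, a ≤ 4 * (k + 1) → NN (k + 1) a ∈ W (k + 1) (3 * a) (4 * (k + 1)) := by
  induction k with
  | zero =>
    intro a ha
    interval_cases a
    · rw [zero_add, N10]; exact zero_mem _
    · rw [zero_add, N11, neg_mul]
      exact neg_mem (W_ofNat _ _ _ _ _ (W_gen 1 3 4 3 (by omega) (by omega)))
    · rw [zero_add, N12]; exact zero_mem _
    · rw [zero_add, N13]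
      have := W_gen 1 9 4 1 (by omega) (by omega)
      rw [show sP ^ (2 * 1) * sF ^ 1 = sF * sP ^ 2 by ring] at this
      exact W_ofNat _ _ _ _ _ this
    · rw [zero_add, N14]; exact zero_mem _
  | succ k ih =>
    have r1 : ∀ j, j + 1 ≤ 4 * (k + 1) →
        NN (k + 2) (j + 1) ∈ W (k + 2) (3 * (j + 1)) (4 * (k + 2)) := by
      intro j hj
      rw [N1]
      refine sub_mem ?_ ?_
      · have := W_PF (k + 1) _ _ 0 (3 * (j + 1)) (4 * (k + 2)) (by omega) (by omega) _ (ih (j + 1) hj)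
        rwa [pow_zero, one_mul] at this
      · have := W_PF (k + 1) _ _ 3 (3 * (j + 1)) (4 * (k + 2)) (by omega) (by omega) _ (ih j (by omega))
        have := W_ofNat _ _ _ 4 _ this
        convert this using 1; ring
    have r2 : ∀ j, j + 1 ≤ 4 * (k + 1) →
        NN (k + 2) (j + 4) ∈ W (k + 2) (3 * (j + 4)) (4 * (k + 2)) := by
      intro j hj
      have h1 := W_PF (k + 1) _ _ 1 (3 * (j + 4)) (4 * (k + 2)) (by omega) (by omega) _ (ih (j + 1) hj)
      have h2 := W_PF (k + 1) _ _ 4 (3 * (j + 4)) (4 * (k + 2)) (by omega) (by omega) _ (ih j (by omega))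
      have := sub_mem h1 h2
      rw [N2]
      convert this using 1; ring
    intro a ha
    show NN (k + 2) a ∈ W (k + 2) (3 * a) (4 * (k + 2))
    rcases Nat.lt_or_ge a 1 with h | h
    · obtain rfl : a = 0 := by omega
      apply W_cancel
      rw [N3]
      refine sub_mem (W_ofNat _ _ _ 4 _ ?_) (W_ofNat _ _ _ 3 _ ?_)
      · exact W_mono (k + 2) (3 * (2 + 1)) _ _ _ (by omega) (by omega) (r1 2 (by omega))
      · have := W_PF (k + 1) _ _ 1 1 (4 * (k + 2)) (by omega) (by omega) _ (ih 0 (by omega))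
        rwa [pow_one] at this
    rcases Nat.lt_or_ge (4 * (k + 1)) a with h' | h'
    · rcases Nat.lt_or_ge a (4 * (k + 2)) with h3 | h3
      · obtain ⟨j, rfl⟩ : ∃ j, a = j + 4 := ⟨a - 4, by omega⟩
        exact r2 j (by omega)
      · obtain ⟨j, rfl⟩ : ∃ j, a = j + 4 := ⟨a - 4, by omega⟩
        rw [N4]
        refine add_mem ?_ (W_ofNat _ _ _ 3 _ ?_)
        · have h1 : NN (k + 2) (j + 1) ∈ W (k + 2) (3 * (j + 1)) (4 * (k + 2)) := by
            obtain ⟨i, rfl⟩ : ∃ i, j = i + 3 := ⟨j - 3, by omega⟩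
            exact r2 i (by omega)
          have h2 := W_mono (k + 2) _ _ (3 * (j + 1)) (4 * (k + 2) - 1) rfl
            (by intro i; omega) h1
          have := W_F (k + 2) _ _ 1 (3 * (j + 4)) (4 * (k + 2)) (by omega) (by omega) _ h2
          rwa [pow_one] at this
        · exact W_PF (k + 1) _ _ 4 (3 * (j + 4)) (4 * (k + 2)) (by omega) (by omega) _
            (ih j (by omega))
    · obtain ⟨j, rfl⟩ : ∃ j, a = j + 1 := ⟨a - 1, by omega⟩
      exact r1 j h'
end B4

open PowerSeries Finset
namespace B4

lemma binom_id {R : Type*} [CommRing R] (a b : R) (n : ℕ) :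
    ∑ i ∈ range (n + 1), (n.choose i : R) ^ 2 * a ^ (2 * (n - i)) * b ^ (2 * i) =
    ∑ i ∈ range (n + 1), (n.choose i : R) * (Nat.centralBinom i : R) * (-1) ^ i *
      (a + b) ^ (2 * (n - i)) * (a * b) ^ i := by
  have key : ((Polynomial.X + Polynomial.C (a ^ 2)) ^ n * (Polynomial.X + Polynomial.C (b ^ 2)) ^ n) =
      ((Polynomial.X + Polynomial.C (-(a * b))) ^ 2 + Polynomial.C ((a + b) ^ 2) * Polynomial.X) ^ n := by
    rw [← mul_pow]
    congr 1
    simp only [map_pow, map_mul, map_add, map_neg]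
    ring
  have h := congrArg (fun f => Polynomial.coeff f n) key
  rw [Polynomial.coeff_mul, Finset.Nat.sum_antidiagonal_eq_sum_range_succ_mk,
    add_pow ((Polynomial.X + Polynomial.C (-(a * b))) ^ 2),
    Polynomial.finsetSum_coeff] at h
  convert h using 1
  · refine sum_congr rfl fun i hi => ?_
    have hi : i ≤ n := by simpa [Nat.lt_succ_iff] using hi
    rw [Polynomial.coeff_X_add_C_pow, Polynomial.coeff_X_add_C_pow, Nat.choose_symm hi,
      Nat.sub_sub_self hi, ← pow_mul, ← pow_mul]
    ring
  · refine sum_congr rfl fun i hi => ?_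
    have hi : i ≤ n := by simpa [Nat.lt_succ_iff] using hi
    have e : ((Polynomial.X + Polynomial.C (-(a * b))) ^ 2) ^ i *
        (Polynomial.C ((a + b) ^ 2) * Polynomial.X) ^ (n - i) * (n.choose i : Polynomial R) =
        Polynomial.X ^ (n - i) * (Polynomial.C (((a + b) ^ 2) ^ (n - i) * (n.choose i : R)) *
        (Polynomial.X + Polynomial.C (-(a * b))) ^ (2 * i)) := by
      rw [Polynomial.C_mul, Polynomial.C_pow (n := n - i), Polynomial.C_eq_natCast, ← pow_mul (Polynomial.X + _), mul_pow]
      ring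
    have e2 := Polynomial.coeff_X_pow_mul (Polynomial.C (((a + b) ^ 2) ^ (n - i) * (n.choose i : R)) *
        (Polynomial.X + Polynomial.C (-(a * b))) ^ (2 * i)) (n - i) i
    rw [show i + (n - i) = n by omega] at e2
    rw [e, e2, Polynomial.coeff_C_mul, Polynomial.coeff_X_add_C_pow,
      Nat.centralBinom_eq_two_mul_choose, ← pow_mul, show 2 * i - i = i by omega, neg_pow (a * b)]
    ring

section
variable (p : ℕ)
/-- reduction mod `p` -/
noncomputable abbrev red : ℤ⟦X⟧ →+* (ZMod p)⟦X⟧ := PowerSeries.map (Int.castRingHom (ZMod p))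

lemma red_ex (k : ℕ) [NeZero k] (f : ℤ⟦X⟧) : red p (ex k f) = ex k (red p f) := by
  rw [red, ex, map_expand]

lemma red_U (k : ℕ) (f : ℤ⟦X⟧) : red p (U k f) = U k (red p f) := by
  ext n; simp [coeff_U]

lemma red_Th (f : ℤ⟦X⟧) : red p (Th f) = Th (red p f) := by
  ext n; simp [coeff_Th]

end

section
variable (p : ℕ) [Fact p.Prime]

lemma cb (n : ℕ) (hn : 2 * n + 1 = p) (i : ℕ) (hi : i ≤ n) :
    (Nat.centralBinom i : ZMod p) * (-1) ^ i = 4 ^ i * (n.choose i : ZMod p) := by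
  induction i with
  | zero => simp
  | succ i ih =>
    have ih := ih (by omega)
    have h0 : ((i + 1 : ℕ) : ZMod p) ≠ 0 := by
      rw [Ne, ZMod.natCast_eq_zero_iff]
      intro h
      have := Nat.le_of_dvd (by omega) h
      omega
    have h1 := congrArg (Nat.cast (R := ZMod p)) (Nat.succ_mul_centralBinom_succ i)
    have h2 := congrArg (Nat.cast (R := ZMod p)) (Nat.choose_succ_right_eq n i)
    have h3 : (2 * n + 1 : ZMod p) = 0 := by
      have := congrArg (Nat.cast (R := ZMod p)) hn
      push_cast at this
      rw [this]; simp
    push_cast [Nat.cast_sub (show i ≤ n by omega)] at h0 h1 h2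
    apply mul_left_cancel₀ h0
    rw [pow_succ, pow_succ]
    linear_combination -(-1) ^ i * h1 - 2 * (2 * i + 1) * ih - 4 * 4 ^ i * h2
      - 2 * 4 ^ i * (n.choose i) * h3

lemma frob (f : (ZMod p)⟦X⟧) [NeZero p] : f ^ p = ex p f := by
  have h := MvPowerSeries.map_frobenius_expand (σ := Unit) (R := ZMod p) (p := p)
    (hp := NeZero.ne p) (f := f)
  rw [ZMod.frobenius_zmod] at h
  have h2 : MvPowerSeries.map (RingHom.id (ZMod p)) (MvPowerSeries.expand p (NeZero.ne p) f)
    = MvPowerSeries.expand p (NeZero.ne p) f := by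
    ext; simp
  rw [h2] at h
  exact h.symm

/-- the Hasse invariant -/
theorem hasse (hp : p ≠ 2) : ∃ A : Polynomial (ZMod p), A.natDegree ≤ 4 * (p - 1) ∧
    (red p sP) ^ (2 * (p - 1)) * Polynomial.aeval (red p sF) A = 1 := by
  obtain ⟨n, hn⟩ : ∃ n, 2 * n + 1 = p := by
    obtain ⟨n, hn⟩ := (Fact.out : p.Prime).odd_of_ne_two hp
    exact ⟨n, hn.symm⟩
  set S := red p sS with hS
  set P := red p sP with hP
  set F := red p sF with hF
  have e1 : S ^ 2 + P ^ 2 = 2 * (ex 2 S) ^ 2 := by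
    have := congrArg (red p) SP_add
    simp only [map_add, map_mul, map_pow, red_ex, map_ofNat] at this
    exact this
  have e2 : P * S = (ex 2 P) ^ 2 := by
    have := congrArg (red p) PS
    simp only [map_mul, map_pow, red_ex] at this
    exact this
  have e3 : S ^ 4 = P ^ 4 * (1 + 16 * F ^ 8) := by
    have := congrArg (red p) S4F
    simp only [map_mul, map_pow, map_add, map_one, map_ofNat] at this
    exact this
  have h4 : (4 : (ZMod p)⟦X⟧) ^ n = 1 := by
    have : (4 : ZMod p) ^ n = 1 := by
      have h2 : (2 : ZMod p) ≠ 0 := by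
        have : ((2 : ℕ) : ZMod p) ≠ 0 := by
          rw [Ne, ZMod.natCast_eq_zero_iff]
          intro h
          exact hp ((Nat.prime_dvd_prime_iff_eq Fact.out Nat.prime_two).1 h)
        exact_mod_cast this
      have := ZMod.pow_card_sub_one_eq_one h2
      rw [show p - 1 = 2 * n by omega, pow_mul] at this
      rw [← this]; norm_num
    have := congrArg (C (R := ZMod p)) this
    simpa only [map_pow, map_one, map_ofNat] using this
  set B := ∑ i ∈ range (n + 1), (n.choose i : (ZMod p)⟦X⟧) ^ 2 * S ^ (4 * (n - i)) * P ^ (4 * i) with hB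
  have hB2 : ex 2 B = B := by
    have h := binom_id (S ^ 2) (P ^ 2) n
    have l : ∑ i ∈ range (n + 1), (n.choose i : (ZMod p)⟦X⟧) ^ 2 * (S ^ 2) ^ (2 * (n - i)) *
      (P ^ 2) ^ (2 * i) = B := by
      rw [hB]
      refine sum_congr rfl fun i hi => ?_
      rw [← pow_mul, ← pow_mul]
      ring
    rw [l] at h
    rw [hB] at h
    conv_rhs => rw [hB, h]
    rw [hB, map_sum]
    symm
    refine sum_congr rfl fun i hi => ?_
    have hi : i ≤ n := by simpa [Nat.lt_succ_iff] using hi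
    have hc := congrArg (C (R := ZMod p)) (cb p n hn i hi)
    simp only [map_mul, map_pow, map_natCast, map_neg, map_one, map_ofNat] at hc
    rw [e1, ← mul_pow S P, ← pow_mul, mul_comm S P, e2, mul_assoc (n.choose i : (ZMod p)⟦X⟧), hc]
    simp only [map_mul, map_pow, map_natCast]
    have h4' : (4 : (ZMod p)⟦X⟧) ^ (n - i) * 4 ^ i = 1 := by
      rw [← pow_add, Nat.sub_add_cancel hi, h4]
    rw [mul_pow 2, pow_mul 2 2, show (2 : (ZMod p)⟦X⟧) ^ 2 = 4 by norm_num, ← pow_mul, ← pow_mul,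
      show 2 * (2 * (n - i)) = 4 * (n - i) by ring, show 2 * (2 * i) = 4 * i by ring]
    linear_combination (n.choose i : (ZMod p)⟦X⟧) ^ 2 * (ex 2 S) ^ (4 * (n - i)) *
      (ex 2 P) ^ (4 * i) * h4'
  set c : ZMod p := (((2 * n).choose n : ℕ) : ZMod p) with hc
  have hc0 : c ≠ 0 := by
    rw [hc, Ne, ZMod.natCast_eq_zero_iff]
    intro h
    have h2 : p ∣ (2 * n).factorial := by
      rw [← Nat.choose_mul_factorial_mul_factorial (show n ≤ 2 * n by omega), mul_assoc]
      exact h.mul_right _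
    have := (Nat.Prime.dvd_factorial Fact.out).1 h2
    omega
  have hBc : B = C c := by
    ext m
    rcases Nat.eq_zero_or_pos m with rfl | hm
    · rw [coeff_zero_eq_constantCoeff_apply, coeff_zero_eq_constantCoeff_apply, constantCoeff_C, hB,
        map_sum, hc, ← Nat.sum_range_choose_sq]
      push_cast
      refine sum_congr rfl fun i hi => ?_
      have h1 : constantCoeff S = 1 := by
        rw [hS, ← coeff_zero_eq_constantCoeff_apply, coeff_map, coeff_zero_eq_constantCoeff_apply, cS,
          map_one]
      have h2 : constantCoeff P = 1 := by
        rw [hP, ← coeff_zero_eq_constantCoeff_apply, coeff_map, coeff_zero_eq_constantCoeff_apply, cP,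
          map_one]
      simp [h1, h2]
    · rw [ex2_const 1 1 (by ring) B (by rw [hB2, map_one, one_mul]) m hm, coeff_C, if_neg hm.ne']
  refine ⟨Polynomial.C c⁻¹ * ∑ i ∈ range (n + 1), (n.choose i : Polynomial (ZMod p)) ^ 2 *
    (1 + 16 * Polynomial.X ^ 8) ^ (n - i), ?_, ?_⟩
  · refine (Polynomial.natDegree_C_mul_le _ _).trans (Polynomial.natDegree_sum_le_of_forall_le _ _ ?_)
    intro i hi
    have : (1 + 16 * Polynomial.X ^ 8 : Polynomial (ZMod p)).natDegree ≤ 8 := by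
      compute_degree
    rw [← Nat.cast_pow, ← Polynomial.C_eq_natCast]
    refine (Polynomial.natDegree_C_mul_le _ _).trans (Polynomial.natDegree_pow_le.trans ?_)
    have : n - i ≤ n := Nat.sub_le _ _
    calc _ ≤ n * 8 := Nat.mul_le_mul this ‹_›
      _ ≤ _ := by omega
  · have : P ^ (2 * (p - 1)) * Polynomial.aeval F (∑ i ∈ range (n + 1),
       (n.choose i : Polynomial (ZMod p)) ^ 2 * (1 + 16 * Polynomial.X ^ 8) ^ (n - i)) = B := by
      rw [map_sum, mul_sum, hB]
      refine sum_congr rfl fun i hi => ?_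
      have hi : i ≤ n := by simpa [Nat.lt_succ_iff] using hi
      simp only [map_mul, map_pow, map_add, map_one, map_natCast, map_ofNat, Polynomial.aeval_X]
      rw [pow_mul S 4, e3, mul_pow, show 2 * (p - 1) = 4 * (n - i) + 4 * i by omega, pow_add,
        pow_mul P 4 (n - i)]
      ring
    rw [map_mul, Polynomial.aeval_C, mul_left_comm, this, hBc,
      PowerSeries.algebraMap_apply, ← map_mul]
    simp [hc0]
end
end B4

open PowerSeries Finset
namespace B4

lemma aeval_F_inj {K : Type*} [Field K] (F : K⟦X⟧) (hF : F ≠ 0) (h0 : constantCoeff F = 0) :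
    ∀ (n : ℕ) (f : Polynomial K), f.natDegree ≤ n → Polynomial.aeval F f = 0 → f = 0 := by
  intro n
  induction n with
  | zero =>
    intro f hf h
    rw [Polynomial.eq_C_of_natDegree_le_zero hf] at h ⊢
    rw [Polynomial.aeval_C, PowerSeries.algebraMap_apply] at h
    have := congrArg constantCoeff h
    simp at this
    simp [this]
  | succ n ih =>
    intro f hf h
    have hd := Polynomial.divX_mul_X_add f
    rw [← hd, map_add, map_mul, Polynomial.aeval_X, Polynomial.aeval_C] at h
    have hc : f.coeff 0 = 0 := by
      have := congrArg constantCoeff h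
      simpa [h0, PowerSeries.algebraMap_apply] using this
    rw [hc, map_zero, add_zero] at h
    have := ih f.divX (by rw [Polynomial.natDegree_divX_eq_natDegree_tsub_one]; omega)
      ((mul_eq_zero.1 h).resolve_right hF)
    rw [← hd, this, hc]; simp

section
variable (p : ℕ) [Fact p.Prime]

lemma cast_p : ((p : ℕ) : (ZMod p)⟦X⟧) = 0 := by
  rw [← map_natCast (C (R := ZMod p)), CharP.cast_eq_zero, map_zero]

lemma Th_p_pow [NeZero p] (f : (ZMod p)⟦X⟧) (k : ℕ) : Th (f ^ (p * k)) = 0 := by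
  rw [Th_pow]; simp [cast_p]

lemma red_F_ne : red p sF ≠ 0 := by
  obtain ⟨g, hg⟩ := first_F
  intro h
  have := congrArg (coeff 1) h
  rw [hg] at this
  simp [coeff_X_pow_mul'] at this

lemma red_F_c0 : constantCoeff (red p sF) = 0 := by
  rw [← coeff_zero_eq_constantCoeff_apply, coeff_map, coeff_zero_eq_constantCoeff_apply, sF]
  simp

lemma red_P_ne : red p sP ≠ 0 := by
  intro h
  have := congrArg (coeff 0) h
  rw [coeff_map, coeff_zero_eq_constantCoeff_apply, cP] at this
  simp at this

theorem U_F_mem (hp : p ≠ 2) : ∃ G : Polynomial (ZMod p), G.natDegree ≤ 8 * (p - 1) ∧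
    U p (red p sF) = (red p sP) ^ (4 * (p - 1)) * Polynomial.aeval (red p sF) G := by
  have hpp : p.Prime := Fact.out
  have : NeZero p := ⟨hpp.ne_zero⟩
  have h2p := hpp.two_le
  obtain ⟨A, hA, hPA⟩ := hasse p hp
  set P := red p sP with hP
  set F := red p sF with hF
  have hTh : Th F = F * (P ^ 4 * (1 + 16 * F ^ 8)) := by
    have := congrArg (red p) ThF
    simp only [red_Th, map_mul, map_pow, map_add, map_one, map_ofNat] at this
    exact this
  have hP4 : P ^ 4 = P ^ (p * 4) * (Polynomial.aeval F A) ^ 2 := by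
    have : P ^ (p * 4) = P ^ 4 * (P ^ (2 * (p - 1))) ^ 2 := by
      rw [← pow_mul, ← pow_add]; congr 1; omega
    rw [this]
    linear_combination (-P ^ 4) * (P ^ (2 * (p - 1)) * Polynomial.aeval F A + 1) * hPA
  have hDeg : (1 + 16 * Polynomial.X ^ 8 : Polynomial (ZMod p)).natDegree ≤ 8 := by
    compute_degree
  have iter : ∀ j, ∃ g : Polynomial (ZMod p), g.natDegree ≤ 1 + 8 * p * j ∧
      Th^[j] F = P ^ (p * (4 * j)) * Polynomial.aeval F g := by
    intro j
    induction j with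
    | zero => exact ⟨Polynomial.X, Polynomial.natDegree_X_le.trans (by omega), by simp⟩
    | succ j ih =>
      obtain ⟨g, hg, h⟩ := ih
      rcases Nat.eq_zero_or_pos g.natDegree with h0 | h0
      · refine ⟨0, by simp, ?_⟩
        rw [Function.iterate_succ_apply', h, Th_mul, Th_p_pow, Derivation.map_aeval,
          Polynomial.derivative_of_natDegree_zero h0]
        simp
      refine ⟨g.derivative * (Polynomial.X * (1 + 16 * Polynomial.X ^ 8)) * A ^ 2, ?_, ?_⟩
      · have := Polynomial.natDegree_derivative_lt h0.ne'
        have h1 := Polynomial.natDegree_mul_le (p := g.derivative *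
          (Polynomial.X * (1 + 16 * Polynomial.X ^ 8))) (q := A ^ 2)
        have h2 := Polynomial.natDegree_mul_le (p := g.derivative)
          (q := (Polynomial.X * (1 + 16 * Polynomial.X ^ 8)))
        have h3 := Polynomial.natDegree_mul_le (p := (Polynomial.X : Polynomial (ZMod p)))
          (q := (1 + 16 * Polynomial.X ^ 8))
        have h4 := Polynomial.natDegree_X_le (R := ZMod p)
        have h5 := Polynomial.natDegree_pow_le (p := A) (n := 2)
        have h6 : 8 * p * (j + 1) = 8 * p * j + 8 * p := by ring
        omega
      · rw [Function.iterate_succ_apply', h, Th_mul, Th_p_pow, Derivation.map_aeval, hTh, hP4]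
        simp only [map_mul, map_pow, map_add, map_one, map_ofNat, Polynomial.aeval_X, smul_eq_mul]
        ring
  obtain ⟨g, hg, h⟩ := iter (p - 1)
  have co : ∀ j n, coeff n (Th^[j] F) = (n : ZMod p) ^ j * coeff n F := by
    intro j n
    induction j with
    | zero => simp
    | succ j ih => rw [Function.iterate_succ_apply', coeff_Th, ih]; ring
  have hV : ex p (U p F) = F - Th^[p - 1] F := by
    ext n
    rw [map_sub, co, ex, coeff_expand]
    split_ifs with hd
    · obtain ⟨m, rfl⟩ := hd
      rw [coeff_U, Nat.mul_div_cancel_left _ hpp.pos]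
      have : p - 1 ≠ 0 := by omega
      simp [this]
    · have : (n : ZMod p) ≠ 0 := by rwa [Ne, ZMod.natCast_eq_zero_iff]
      rw [ZMod.pow_card_sub_one_eq_one this]; ring
  have hF1 : F = P ^ (p * (4 * (p - 1))) * Polynomial.aeval F (Polynomial.X * A ^ (2 * p)) := by
    have : P ^ (p * (4 * (p - 1))) = (P ^ (2 * (p - 1))) ^ (2 * p) := by
      rw [← pow_mul]; congr 1; ring
    rw [this, map_mul, map_pow, Polynomial.aeval_X, mul_left_comm, ← mul_pow, hPA, one_pow, mul_one]
  set G := Polynomial.X * A ^ (2 * p) - g with hG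
  have hVG : ex p (U p F) = P ^ (p * (4 * (p - 1))) * Polynomial.aeval F G := by
    rw [hV, h, hG, map_sub, mul_sub, ← hF1]
  have hGd : G.natDegree ≤ 1 + 8 * p * (p - 1) := by
    refine (Polynomial.natDegree_sub_le _ _).trans (max_le ?_ hg)
    have h3 := Polynomial.natDegree_mul_le (p := (Polynomial.X : Polynomial (ZMod p)))
          (q := A ^ (2 * p))
    have h4 := Polynomial.natDegree_X_le (R := ZMod p)
    have h5 := Polynomial.natDegree_pow_le (p := A) (n := 2 * p)
    have h6 : 2 * p * A.natDegree ≤ 2 * p * (4 * (p - 1)) := Nat.mul_le_mul le_rfl hA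
    have h7 : 2 * p * (4 * (p - 1)) = 8 * p * (p - 1) := by ring
    omega
  have hder : G.derivative = 0 := by
    have h1 := congrArg Th hVG
    rw [Th_ex, Th_mul, Th_p_pow, Derivation.map_aeval, hTh] at h1
    simp only [cast_p, zero_mul, mul_zero, add_zero, smul_eq_mul] at h1
    have hne : P ^ (p * (4 * (p - 1))) ≠ 0 := pow_ne_zero _ (red_P_ne p)
    have hne2 : F * (P ^ 4 * (1 + 16 * F ^ 8)) ≠ 0 := by
      refine mul_ne_zero (red_F_ne p) (mul_ne_zero (pow_ne_zero _ (red_P_ne p)) ?_)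
      intro h
      have := congrArg constantCoeff h
      simp [hF, red_F_c0] at this
    have h2 := (mul_eq_zero.1 h1.symm).resolve_left hne
    exact aeval_F_inj F (red_F_ne p) (red_F_c0 p) _ _ le_rfl ((mul_eq_zero.1 h2).resolve_right hne2)
  have hex := Polynomial.expand_contract (p := p) hder hpp.ne_zero
  refine ⟨Polynomial.contract p G, ?_, ?_⟩
  · have := congrArg Polynomial.natDegree hex
    rw [Polynomial.natDegree_expand] at this
    rw [← this] at hGd
    by_contra hcon
    push Not at hcon
    have : (8 * (p - 1) + 1) * p ≤ (Polynomial.contract p G).natDegree * p :=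
      Nat.mul_le_mul hcon le_rfl
    have h7 : (8 * (p - 1) + 1) * p = 8 * p * (p - 1) + p := by ring
    omega
  · have h1 : ex p (U p F) = ex p (P ^ (4 * (p - 1)) * Polynomial.aeval F (Polynomial.contract p G)) := by
      rw [hVG, ← frob p (_ * _), mul_pow, ← pow_mul, mul_comm p (4 * (p - 1)), ← map_pow (Polynomial.aeval F),
        ← ZMod.expand_card, hex]
    have := congrArg (U p) h1
    rwa [U_ex, U_ex] at this
end
end B4

open PowerSeries Finset
namespace B4

section
variable (p : ℕ) [Fact p.Prime]

/-- the `T_3`-stable space -/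
noncomputable def VV : Submodule (ZMod p) (ZMod p)⟦X⟧ :=
  Submodule.span (ZMod p) (Set.image (fun i => (red p sP) ^ (4 * (p - 1)) * (red p sF) ^ i)
    (Set.Iic (8 * (p - 1))))

lemma VV_finite : (VV p : Set (ZMod p)⟦X⟧).Finite := by
  have : Module.Finite (ZMod p) (VV p) := by
    rw [VV, Module.Finite.iff_fg]
    exact Submodule.fg_span ((Set.finite_Iic _).image _)
  have : Finite (VV p) := Module.finite_of_finite (ZMod p)
  exact Set.toFinite _

lemma VV_poly (G : Polynomial (ZMod p)) (hG : G.natDegree ≤ 8 * (p - 1)) :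
    (red p sP) ^ (4 * (p - 1)) * Polynomial.aeval (red p sF) G ∈ VV p := by
  rw [Polynomial.aeval_eq_sum_range, mul_sum]
  refine sum_mem fun i hi => ?_
  rw [mul_smul_comm]
  refine (VV p).smul_mem _ (Submodule.subset_span ⟨i, ?_, rfl⟩)
  simp at hi ⊢; omega

/-- Hecke operator -/
noncomputable def TT : (ZMod p)⟦X⟧ →ₗ[ZMod p] (ZMod p)⟦X⟧ :=
  U 3 + (3⁻¹ : ZMod p) • (ex 3 : (ZMod p)⟦X⟧ →ₐ[ZMod p] (ZMod p)⟦X⟧).toLinearMap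

lemma TT_apply (f : (ZMod p)⟦X⟧) : TT p f = U 3 f + (3⁻¹ : ZMod p) • ex 3 f := by
  simp [TT]

lemma three_ne (hp : p ≠ 3) : (3 : ZMod p) ≠ 0 := by
  have : ((3 : ℕ) : ZMod p) ≠ 0 := by
    rw [Ne, ZMod.natCast_eq_zero_iff]
    intro h
    exact hp ((Nat.prime_dvd_prime_iff_eq Fact.out Nat.prime_three).1 h)
  exact_mod_cast this

lemma TT_mem (hp : p ≠ 3) (f : (ZMod p)⟦X⟧) (hf : f ∈ VV p) : TT p f ∈ VV p := by
  have h2 := (Fact.out : p.Prime).two_le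
  have h3 := three_ne p hp
  suffices VV p ≤ (VV p).comap (TT p) from this hf
  refine Submodule.span_le.2 ?_
  rintro _ ⟨i, hi, rfl⟩
  simp only [Set.mem_Iic] at hi
  have hN := claim (2 * (p - 1) - 1) i (by omega)
  rw [show 2 * (p - 1) - 1 + 1 = 2 * (p - 1) by omega] at hN
  have hmem : ∀ g, g ∈ W (2 * (p - 1)) (3 * i) (4 * (2 * (p - 1))) → red p g ∈ VV p := by
    intro g hg
    induction hg using Submodule.span_induction with
    | mem x hx =>
      obtain ⟨j, h1, h2, rfl⟩ := hx
      rw [map_mul, map_pow, map_pow]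
      exact Submodule.subset_span ⟨j, by simp; omega, by simp only; congr 2; ring⟩
    | zero => rw [map_zero]; exact zero_mem _
    | add x y _ _ hx hy => rw [map_add]; exact add_mem hx hy
    | smul c x _ hx => rw [map_zsmul]; exact zsmul_mem hx c
  have hN := hmem _ hN
  set g := (red p sP) ^ (4 * (p - 1)) * (red p sF) ^ i with hg
  have e : red p (NN (2 * (p - 1)) i) = (3 : ZMod p) • TT p g := by
    have h3' : (-3 : (ZMod p)⟦X⟧) ^ (2 * (p - 1)) = 1 := by
      have := congrArg (C (R := ZMod p)) (ZMod.pow_card_sub_one_eq_one (neg_ne_zero.2 h3))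
      simp only [map_pow, map_neg, map_one, map_ofNat] at this
      rw [mul_comm, pow_mul, this, one_pow]
    have hg2 : red p (sP ^ (2 * (2 * (p - 1))) * sF ^ i) = g := by
      rw [map_mul, map_pow, map_pow, hg, show 2 * (2 * (p - 1)) = 4 * (p - 1) by ring]
    rw [NN]
    generalize sP ^ (2 * (2 * (p - 1))) * sF ^ i = y at hg2
    rw [map_add, map_mul, map_mul, red_U, red_ex, hg2, map_pow, map_neg,
      map_ofNat, h3', TT_apply, smul_add, smul_smul, mul_inv_cancel₀ h3, one_smul, one_mul,
      PowerSeries.smul_eq_C_mul, map_ofNat]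
  rw [e] at hN
  have := (VV p).smul_mem (3⁻¹ : ZMod p) hN
  rwa [smul_smul, inv_mul_cancel₀ h3, one_smul] at this

/-- pair recursion -/
noncomputable def Phi (x : (ZMod p)⟦X⟧ × (ZMod p)⟦X⟧) : (ZMod p)⟦X⟧ × (ZMod p)⟦X⟧ :=
  (TT p x.1 - (3⁻¹ : ZMod p) • x.2, x.1)

lemma Phi_inj (hp : p ≠ 3) : Function.Injective (Phi p) := by
  rintro ⟨a, b⟩ ⟨c, d⟩ h
  simp only [Phi, Prod.mk.injEq] at h
  obtain ⟨h1, rfl⟩ := h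
  have := sub_right_injective h1
  rw [smul_right_injective _ (inv_ne_zero (three_ne p hp)) this]

lemma Phi_iter (f : (ZMod p)⟦X⟧) (n : ℕ) : ((Phi p)^[n] (f, 0)).1 =
    (U 3)^[n] f + (3⁻¹ : ZMod p) • ex 3 ((Phi p)^[n] (f, 0)).2 := by
  induction n with
  | zero => simp
  | succ n ih =>
    rw [Function.iterate_succ_apply', Function.iterate_succ_apply' (U 3)]
    set x := (Phi p)^[n] (f, 0)
    simp only [Phi]
    rw [TT_apply]
    nth_rewrite 1 [ih]
    rw [map_add, map_smul, U_ex]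
    abel

lemma coeff_U_iter (f : (ZMod p)⟦X⟧) (n m : ℕ) : coeff m ((U 3)^[n] f) = coeff (3 ^ n * m) f := by
  induction n generalizing m with
  | zero => simp
  | succ n ih => rw [Function.iterate_succ_apply', coeff_U, ih, pow_succ, mul_assoc]

theorem periodic (hp : p ≠ 3) (f : (ZMod p)⟦X⟧) (hf : f ∈ VV p) :
    ∃ π, 0 < π ∧ ∀ N, π ∣ N + 1 → ∀ m, ¬ 3 ∣ m → coeff (3 ^ N * m) f = 0 := by
  set s : Set ((ZMod p)⟦X⟧ × (ZMod p)⟦X⟧) := (VV p : Set (ZMod p)⟦X⟧) ×ˢ (VV p : Set (ZMod p)⟦X⟧)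
  have hs : s.Finite := (VV_finite p).prod (VV_finite p)
  have : Finite s := hs.to_subtype
  have hm : Set.MapsTo (Phi p) s s := by
    rintro ⟨a, b⟩ ⟨ha, hb⟩
    exact ⟨sub_mem (TT_mem p hp a ha) ((VV p).smul_mem _ hb), ha⟩
  have hinj : Function.Injective (hm.restrict) := by
    rintro ⟨a, ha⟩ ⟨b, hb⟩ h
    have := congrArg Subtype.val h
    exact Subtype.ext (Phi_inj p hp this)
  have hx : ((f, 0) : (ZMod p)⟦X⟧ × (ZMod p)⟦X⟧) ∈ s := ⟨hf, zero_mem _⟩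
  obtain ⟨π, hπ, h⟩ := Function.Injective.mem_periodicPts hinj ⟨_, hx⟩
  refine ⟨π, hπ, ?_⟩
  rintro N hN m hm3
  have h1 := h.trans_dvd hN
  have h2 := congrArg Subtype.val h1.eq
  rw [Set.MapsTo.iterate_restrict] at h2
  simp only [Set.MapsTo.val_restrict_apply] at h2
  rw [Function.iterate_succ_apply'] at h2
  have h3 : ((Phi p)^[N] (f, 0)).1 = 0 := congrArg Prod.snd h2
  rw [Phi_iter] at h3
  have h4 := congrArg (coeff m) h3
  rw [map_add, coeff_U_iter, map_smul, ex, coeff_expand, if_neg hm3] at h4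
  simpa using h4

theorem large_prime (hp2 : p ≠ 2) (hp3 : p ≠ 3) : ∃ π, 0 < π ∧ ∀ N, π ∣ N + 1 → ∀ m, ¬ 3 ∣ m →
    ∀ n, 8 * n + 1 = p * (3 ^ N * m) → p ∣ bReg 4 n := by
  obtain ⟨G, hG, h⟩ := U_F_mem p hp2
  obtain ⟨π, hπ, hper⟩ := periodic p hp3 (U p (red p sF)) (h ▸ VV_poly p G hG)
  refine ⟨π, hπ, fun N hN m hm n hn => ?_⟩
  have := hper N hN m hm
  rw [coeff_U, ← hn, coeff_map, coeff_F] at this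
  rw [← ZMod.natCast_eq_zero_iff]
  simpa using this
end
end B4

open PowerSeries Finset
namespace B4

lemma Sup_ex3 {R : Type*} [CommRing R] (f : R⟦X⟧) : Sup 0 (ex 3 f) := by
  intro n hn
  rw [ex, coeff_expand, if_neg (by omega)]

lemma U_RP2 : U 3 (sR * sP ^ 2) = 3 * ex 3 sR * (ex 3 sP) ^ 2 - 8 * ex 3 sP * (sP ^ 2 * sF ^ 3) := by
  obtain ⟨g, h, hg⟩ := tri_P
  obtain ⟨r, h', hr⟩ := tri_R
  have h1 : U 3 (sR * sP) = ex 3 sR * ex 3 sP - 4 * (sP ^ 2 * sF ^ 3) := by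
    have := N11
    have e : sP ^ (2 * 1) * sF ^ 1 = sR * sP := by rw [← FP]; ring
    rw [NN, e, map_mul (ex 3)] at this
    apply mul_left_cancel₀ (nz 3)
    linear_combination this
  have h2 : sR * sP = - ex 3 (ex 3 sR * ex 3 sP) - ex 3 (ex 3 sR) * g + ex 3 (ex 3 sP) * r + r * g := by
    conv_lhs => rw [h, h', ex9, ex9]
    rw [map_mul]; ring
  have h3 : U 3 (sR * sP) = - (ex 3 sR * ex 3 sP) + U 3 (r * g) := by
    conv_lhs => rw [h2]
    rw [map_add, map_add, map_sub, map_neg, U_ex, U_ex_mul, U_ex_mul, hg.U (by norm_num),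
      hr.U (by norm_num)]
    ring
  have h4 : sR * sP ^ 2 = - (ex 3 (ex 3 sR) * sP ^ 2) + ex 3 ((ex 3 sP) ^ 2) * r +
      2 * (ex 3 (ex 3 sP) * (r * g)) + r * (g * g) := by
    have e1 : sR * sP ^ 2 = - (ex 9 sR * sP ^ 2) + r * sP ^ 2 := by
      linear_combination sP ^ 2 * h'
    have e2 : r * sP ^ 2 = r * (ex 9 sP + g) ^ 2 := by rw [← h]
    rw [e1, e2, ex9, ex9, map_pow]; ring
  conv_lhs => rw [h4]
  rw [map_add, map_add, map_add, map_neg, U_ex_mul, U_ex_mul, U_ofNat, U_ex_mul, hr.U (by norm_num),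
    (hr.mul (hg.mul hg)).U (by norm_num), U_P2]
  linear_combination 2 * ex 3 sP * (h1 - h3)

lemma UF3 : U 3 (red 3 sF) = red 3 sP * ex 3 (red 3 sR) := by
  have h1 := congrArg (red 3) U_RP2
  have h2 := congrArg (red 3) E4
  have h3 := congrArg (red 3) FP
  have h4 : ex 3 (red 3 sF) * ex 3 (red 3 sP) = ex 3 (red 3 sR) := by rw [← h3, map_mul, map_mul]
  simp only [red_U, red_ex, map_mul, map_pow, map_sub, map_add, map_ofNat] at h1 h2 h3
  have h0 : (3 : (ZMod 3)⟦X⟧) = 0 := cast_p 3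
  have e : red 3 sR * red 3 sP ^ 2 = ex 3 (red 3 sP) * red 3 sF := by
    rw [← frob 3, ← h3]; ring
  rw [e, U_ex_mul] at h1
  apply mul_left_cancel₀ (red_P_ne 3)
  linear_combination h1 - 2 * ex 3 (red 3 sP) * h2 + (red 3 sP) ^ 2 * h4 + (ex 3 (red 3 sR) * (ex 3 (red 3 sP)) ^ 2 - 2 * ex 3 (red 3 sF) * (ex 3 (red 3 sP)) ^ 3 - (red 3 sP) ^ 2 * ex 3 (red 3 sF) * ex 3 (red 3 sP)) * h0

lemma UF3_iter (j : ℕ) : (U 3)^[2 * j + 1] (red 3 sF) = (-1) ^ j * (red 3 sP * ex 3 (red 3 sR)) := by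
  induction j with
  | zero => simp [UF3]
  | succ j ih =>
    have h1 : U 3 (red 3 sP) = ex 3 (red 3 sP) := by
      rw [← red_U, U_P, red_ex]
    have h2 : U 3 (red 3 sR) = - ex 3 (red 3 sR) := by
      rw [← red_U, U_R, map_neg, red_ex]
    have a1 : U 3 ((-1) ^ j * (red 3 sP * ex 3 (red 3 sR))) = (-1) ^ j * (ex 3 (red 3 sP) * red 3 sR) := by
      have e : (-1) ^ j * (red 3 sP * ex 3 (red 3 sR)) = red 3 sP * ex 3 ((-1) ^ j * red 3 sR) := by
        simp only [map_mul, map_pow, map_neg, map_one]; ring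
      rw [e, U_mul_ex, h1]; ring
    have a2 : U 3 ((-1) ^ j * (ex 3 (red 3 sP) * red 3 sR)) =
        (-1) ^ (j + 1) * (red 3 sP * ex 3 (red 3 sR)) := by
      have e : (-1) ^ j * (ex 3 (red 3 sP) * red 3 sR) = ex 3 ((-1) ^ j * red 3 sP) * red 3 sR := by
        simp only [map_mul, map_pow, map_neg, map_one]; ring
      rw [e, U_ex_mul, h2]; ring
    rw [show 2 * (j + 1) + 1 = 2 * j + 1 + 1 + 1 by ring, Function.iterate_succ_apply',
      Function.iterate_succ_apply', ih, a1, a2]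

theorem three_dvd (N m n : ℕ) (hN : N % 2 = 1) (hm : m % 3 = 1) (h : 8 * n + 1 = 3 ^ N * m) :
    3 ∣ bReg 4 n := by
  obtain ⟨j, rfl⟩ : ∃ j, N = 2 * j + 1 := ⟨N / 2, by omega⟩
  have h1 := coeff_U_iter 3 (red 3 sF) (2 * j + 1) m
  rw [← h, coeff_map, coeff_F, UF3_iter] at h1
  have h2 : coeff m ((-1) ^ j * (red 3 sP * ex 3 (red 3 sR))) = 0 := by
    obtain ⟨g, hg, hs⟩ := tri_P
    have hs' : Sup 2 (red 3 g) := by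
      intro n hn; rw [coeff_map, hs n hn, map_zero]
    have e : (-1) ^ j * (red 3 sP * ex 3 (red 3 sR)) =
       ex 3 ((-1) ^ j * (ex 3 (red 3 sP) * (red 3 sR))) + red 3 g * ex 3 ((-1) ^ j * red 3 sR) := by
      have : red 3 sP = ex 3 (ex 3 (red 3 sP)) + red 3 g := by
        conv_lhs => rw [hg]
        rw [map_add, ex9, red_ex, red_ex]
      conv_lhs => rw [this]
      simp only [map_mul, map_pow, map_neg, map_one]
      ring
    rw [e, map_add, Sup_ex3 _ m (by omega), (hs'.mul (Sup_ex3 _)) m (by omega), add_zero]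
  rw [h2] at h1
  rw [← ZMod.natCast_eq_zero_iff]
  simpa using h1.symm

lemma red2_P : red 2 sP = 1 := by
  have hm := mono_mul mono_sq 8 (by norm_num)
  ext n
  rw [coeff_map, sP, coeff_one]
  by_cases h : ∃ k, 8 * k ^ 2 = n
  · obtain ⟨k, rfl⟩ := h
    rw [th_coeff hm k, ap]
    have h2 : (2 : ZMod 2) = 0 := by decide
    by_cases hk : k = 0
    · simp [hk]
    · simp [hk, h2]
  · push Not at h
    rw [th_coeff_zero n h, if_neg, map_zero]
    rintro rfl
    exact h 0 (by simp)

theorem two_dvd (N m n : ℕ) (hN : N % 2 = 1) (hm : m % 3 = 1) (h : 8 * n + 1 = 3 ^ N * m) :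
    2 ∣ bReg 4 n := by
  have h1 := congrArg (red 2) FP
  rw [map_mul, red2_P, mul_one] at h1
  have h2 := congrArg (coeff (8 * n + 1)) h1
  rw [coeff_map, coeff_map, coeff_F, sR, th_coeff_zero, map_zero] at h2
  · rw [← ZMod.natCast_eq_zero_iff]
    simpa using h2
  · intro k hk
    rw [h] at hk
    have h3 : padicValNat 3 ((2 * k + 1) ^ 2) = padicValNat 3 (3 ^ N * m) := by rw [hk]
    have hm0 : m ≠ 0 := by omega
    rw [padicValNat.pow, padicValNat.mul (by positivity) hm0, padicValNat.prime_pow,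
      padicValNat.eq_zero_of_not_dvd (show ¬ 3 ∣ m by omega)] at h3
    omega

lemma mod24 (D : ℕ) (h2 : D % 2 = 1) (h3 : D % 3 ≠ 0) : (D * (19 * D % 24)) % 24 = 19 := by
  have hlt : D % 24 < 24 := Nat.mod_lt _ (by norm_num)
  have h2' : D % 24 % 2 = 1 := by omega
  have h3' : D % 24 % 3 ≠ 0 := by omega
  rw [Nat.mul_mod, Nat.mul_mod 19 D]
  clear h2 h3
  generalize D % 24 = d at *
  interval_cases d <;> omega

end B4

/-- For every squarefree positive integer `M`, there is a Ramanujan-type congruence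
`b_4(An + B) ≡ 0 (mod M)`. -/
theorem b4_ramanujan_type_squarefree (M : ℕ) (hM : Squarefree M) :
    ∃ A B : ℕ, 0 < B ∧ B < A ∧ ∀ n : ℕ, bReg 4 (A * n + B) % M = 0 := by
  classical
  have hex : ∀ p : ℕ, ∃ π, 0 < π ∧ (p.Prime → p ≠ 2 → p ≠ 3 → ∀ N, π ∣ N + 1 → ∀ m, ¬ 3 ∣ m →
    ∀ n, 8 * n + 1 = p * (3 ^ N * m) → p ∣ bReg 4 n) := by
    intro p
    by_cases hp : p.Prime ∧ p ≠ 2 ∧ p ≠ 3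
    · obtain ⟨h1, h2, h3⟩ := hp
      have : Fact p.Prime := ⟨h1⟩
      obtain ⟨π, hπ, h⟩ := B4.large_prime p h2 h3
      exact ⟨π, hπ, fun _ _ _ => h⟩
    · exact ⟨1, one_pos, fun h1 h2 h3 => absurd ⟨h1, h2, h3⟩ hp⟩
  choose π hπ hper using hex
  set s := M.primeFactors.filter (fun p => p ≠ 2 ∧ p ≠ 3) with hs
  have hsp : ∀ p ∈ s, p.Prime ∧ p ≠ 2 ∧ p ≠ 3 := by
    intro p hp
    rw [hs, Finset.mem_filter] at hp
    exact ⟨Nat.prime_of_mem_primeFactors hp.1, hp.2⟩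
  set L := ∏ p ∈ s, π p with hL
  have hLpos : 0 < L := Finset.prod_pos fun p _ => hπ p
  set D := ∏ p ∈ s, p with hD
  have hD2 : D % 2 = 1 := by
    have : ¬ 2 ∣ D := by
      intro h
      obtain ⟨p, hp, h⟩ := (Nat.prime_two.prime.dvd_finsetProd_iff _).1 h
      obtain ⟨h1, h2, h3⟩ := hsp p hp
      exact h2 ((Nat.prime_dvd_prime_iff_eq Nat.prime_two h1).1 h).symm
    omega
  have hD3 : D % 3 ≠ 0 := by
    have : ¬ 3 ∣ D := by
      intro h
      obtain ⟨p, hp, h⟩ := (Nat.prime_three.prime.dvd_finsetProd_iff _).1 h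
      obtain ⟨h1, h2, h3⟩ := hsp p hp
      exact h3 ((Nat.prime_dvd_prime_iff_eq Nat.prime_three h1).1 h).symm
    omega
  have hDpos : 0 < D := by omega
  obtain ⟨N, hN⟩ : ∃ N, N + 1 = 2 * L := ⟨2 * L - 1, by omega⟩
  have hNodd : N % 2 = 1 := by omega
  set x := (19 * D) % 24 with hx
  have hxlt : x < 24 := Nat.mod_lt _ (by norm_num)
  have hDx : (D * x) % 24 = 19 := B4.mod24 D hD2 hD3
  have h3N : 3 ^ N % 8 = 3 := by
    obtain ⟨j, hj⟩ : ∃ j, N = 2 * j + 1 := ⟨N / 2, by omega⟩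
    rw [hj, pow_succ, pow_mul, Nat.mul_mod, Nat.pow_mod]; simp
  have hone : (3 ^ N * (D * x)) % 8 = 1 := by
    rw [Nat.mul_mod, h3N]; omega
  obtain ⟨B, hB⟩ : ∃ B, 8 * B + 1 = 3 ^ N * (D * x) := ⟨3 ^ N * (D * x) / 8, by omega⟩
  refine ⟨3 ^ (N + 1) * D, B, ?_, ?_, ?_⟩
  · rcases Nat.eq_zero_or_pos B with h | h
    · rw [h] at hB
      have h3 : 3 ∣ 3 ^ N * (D * x) := (dvd_pow_self 3 (by omega)).mul_right _
      omega
    · exact h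
  · have h1 : 3 ^ N * (D * x) ≤ 3 ^ N * (D * 24) := by gcongr
    have h2 : 3 ^ N * (D * 24) = 8 * (3 ^ (N + 1) * D) := by ring
    omega
  · intro n
    set y := 3 ^ (N + 1) * D * n + B with hy
    have hyy : 8 * y + 1 = 3 ^ N * (D * (x + 24 * n)) := by
      rw [hy]
      have : 3 ^ N * (D * (x + 24 * n)) = 3 ^ N * (D * x) + 8 * (3 ^ (N + 1) * D * n) := by ring
      omega
    have hm : D * (x + 24 * n) % 3 = 1 := by
      have : D * (x + 24 * n) = D * x + 24 * (D * n) := by ring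
      omega
    apply Nat.mod_eq_zero_of_dvd
    rw [← Nat.prod_primeFactors_of_squarefree hM]
    refine Finset.prod_primes_dvd _ (fun p hp => (Nat.prime_of_mem_primeFactors hp).prime) ?_
    intro p hp
    by_cases h2 : p = 2
    · rw [h2]; exact B4.two_dvd N _ y hNodd hm hyy
    by_cases h3 : p = 3
    · rw [h3]; exact B4.three_dvd N _ y hNodd hm hyy
    have hps : p ∈ s := by rw [hs, Finset.mem_filter]; exact ⟨hp, h2, h3⟩
    obtain ⟨D', hD'⟩ : p ∣ D := Finset.dvd_prod_of_mem (fun p => p) hps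
    have hpL : π p ∣ N + 1 := by
      rw [hN]; exact (Finset.dvd_prod_of_mem π hps).mul_left 2
    refine hper p (Nat.prime_of_mem_primeFactors hp) h2 h3 N hpL (D' * (x + 24 * n)) ?_ y ?_
    · intro h
      have : 3 ∣ D * (x + 24 * n) := by
        rw [hD', mul_assoc]; exact h.mul_left p
      omega
    · rw [hyy, hD']; ring
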